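/- arXiv:1304.0745 — 2 statements merged into one kernel-verified Lean document; each statement's English description precedes it below -/
import Mathlib

section
/- Let n ≥ 2 and R = K[x, y, a_{1,1}, …, a_{2,n−2}] be a polynomial ring in 2n − 2 variables over a field K. Let I = (x², y², a_{1,1}x + a_{2,1}y, …, a_{1,n−2}x + a_{2,n−2}y), an ideal generated by n quadrics. Then pd(R/I) = 2n − 2; equivalently, the element xy represents a nonzero socle element of R/I, so depth(R/I) = 0. -/
open MvPolynomial Filter

universe u

/-- `PdLE R n M` means the `R`-module `M` has projective dimension at most `n`:
either `M` is projective (`n = 0`), or `M` is a quotient of a free module by a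
submodule of projective dimension at most `n - 1`. -/
def PdLE (R : Type u) [CommRing R] : ℕ → (M : Type u) → [AddCommGroup M] → [Module R M] → Prop
  | 0, M, _, _ => Module.Projective R M
  | n + 1, M, _, _ => ∃ (F : Type u) (_ : AddCommGroup F) (_ : Module R F),
      Module.Free R F ∧ ∃ f : F →ₗ[R] M, Function.Surjective f ∧ PdLE R n (LinearMap.ker f)

/-- The projective dimension of an `R`-module `M`, as an element of `ℕ∞`
(`⊤` if `M` has no finite free resolution). -/
noncomputable def projDim (R : Type u) [CommRing R] (M : Type u) [AddCommGroup M]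
    [Module R M] : ℕ∞ :=
  sInf ((fun n : ℕ => (n : ℕ∞)) '' {n : ℕ | PdLE R n M})

/-- The height of an ideal: the infimum of the heights of the prime ideals containing it. -/
noncomputable def idealHeight {R : Type*} [CommRing R] (I : Ideal R) : ℕ∞ :=
  ⨅ p ∈ {p : PrimeSpectrum R | I ≤ p.asIdeal}, Order.height p

/-- The length of a module, defined as the Krull dimension of its lattice of submodules. -/
noncomputable def moduleLength (R : Type u) [CommRing R] (M : Type u) [AddCommGroup M]
    [Module R M] : WithBot ℕ∞ :=
  Order.krullDim (Submodule R M)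

/-- `IsHSMultiplicity R mx I e` asserts that the Hilbert–Samuel multiplicity of `R/I`
with respect to the ideal `mx` equals `e`: for `d = dim R/I` there is a polynomial `P`
of degree `d` with `e = d! · (leading coefficient of P)` such that
`length (R/(I + mx^n)) = P(n)` for all large `n`. -/
def IsHSMultiplicity (R : Type u) [CommRing R] (mx I : Ideal R) (e : ℕ) : Prop :=
  ∃ (d : ℕ) (P : Polynomial ℚ),
    ringKrullDim (R ⧸ I) = (d : WithBot ℕ∞) ∧
    P.natDegree = d ∧
    (e : ℚ) = P.leadingCoeff * d.factorial ∧
    ∀ᶠ n : ℕ in Filter.atTop, ∃ k : ℕ, (k : ℚ) = P.eval (n : ℚ) ∧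
      moduleLength R (R ⧸ (I ⊔ mx ^ n)) = ((k : ℕ∞) : WithBot ℕ∞)

/-- A matrix over a `K`-algebra is `1`-generic if it has no generalized zero entry:
for every nonzero vectors `u`, `v` of scalars, `uᵀ M v ≠ 0`. -/
def OneGeneric (K : Type*) [Field K] {R : Type u} [CommRing R] [Algebra K R]
    {m l : ℕ} (M : Matrix (Fin m) (Fin l) R) : Prop :=
  ∀ (u : Fin m → K) (v : Fin l → K), u ≠ 0 → v ≠ 0 →
    ∑ i, ∑ j, algebraMap K R (u i * v j) * M i j ≠ 0

/-- The ideal of all `2 × 2` minors of a `2 × l` matrix. -/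
def minors2 {R : Type u} [CommRing R] {l : ℕ} (M : Matrix (Fin 2) (Fin l) R) : Ideal R :=
  Ideal.span (Set.range fun p : Fin l × Fin l => M 0 p.1 * M 1 p.2 - M 0 p.2 * M 1 p.1)

/-- The homogeneous maximal ideal of a polynomial ring. -/
noncomputable def maxIdeal (K : Type*) [Field K] (σ : Type*) : Ideal (MvPolynomial σ K) :=
  Ideal.span (Set.range (X : σ → MvPolynomial σ K))

/-- The ideal represented by minors by the `2 × (n+1)` matrix with first column `(x, y)ᵀ`
and remaining columns `(u j, v j)ᵀ`: it is generated by the `2 × 2` minors involving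
the first column. -/
def repByMinors {R : Type u} [CommRing R] {n : ℕ} (x y : R) (u v : Fin n → R) : Ideal R :=
  Ideal.span (Set.range fun j : Fin n => x * v j - y * u j)

/-!
Write `R = K[x, y, aᵢⱼ]`, with homogeneous maximal ideal `𝔪`. By Hilbert's syzygy theorem every
`R`-module has projective dimension at most the number `N` of variables: for an `A[X]`-module `M`,
the sequence `0 → A[X] ⊗ M → A[X] ⊗ M → M → 0` whose first map is `X ⊗ 1 - 1 ⊗ X` is exact, so
adjoining a variable raises the global dimension by at most one.

The lower bound comes from the socle. Since `a(xy) = y(ax + by) - by²` and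
`b(xy) = x(ax + by) - ax²`, the element `xy` is killed by `𝔪` in `R/I`, while it is nonzero there
because `I` maps to zero in `K[x, y]/(x², y²)`. Hence `R/𝔪` embeds in `R/I`. The variables form a
regular sequence, so `pd(R/𝔪) = N`; and if `0 → L → M → Q → 0` is exact with `pd L = N`, then
`pd M < N` would force `pd Q = N + 1`, which exceeds the global dimension.
-/

open CategoryTheory RingTheory.Sequence
open scoped TensorProduct

section ProjectiveDimension

variable {R : Type u} [CommRing R]

theorem projective_iff_hasProjectiveDimensionLE_zero_of (M : Type u) [AddCommGroup M]
    [Module R M] : Module.Projective R M ↔ HasProjectiveDimensionLE (ModuleCat.of R M) 0 :=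
  (IsProjective.iff_projective M).trans (projective_iff_hasProjectiveDimensionLE_zero _)

theorem hasProjectiveDimensionLE_succ_iff_ker {P M : Type u} [AddCommGroup P] [Module R P]
    [Module.Projective R P] [AddCommGroup M] [Module R M] {f : P →ₗ[R] M}
    (hf : Function.Surjective f) (n : ℕ) :
    HasProjectiveDimensionLE (ModuleCat.of R M) (n + 1) ↔
      HasProjectiveDimensionLE (ModuleCat.of R (LinearMap.ker f)) n :=
  (LinearMap.shortExact_shortComplexKer hf).hasProjectiveDimensionLT_X₃_iff n
    ((IsProjective.iff_projective P).mp inferInstance)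

theorem pdLE_iff_hasProjectiveDimensionLE (n : ℕ) (M : Type u) [AddCommGroup M] [Module R M] :
    PdLE R n M ↔ HasProjectiveDimensionLE (ModuleCat.of R M) n := by
  induction n generalizing M with
  | zero => exact projective_iff_hasProjectiveDimensionLE_zero_of M
  | succ n ih =>
    constructor
    · rintro ⟨F, _, _, hF, f, hf, hker⟩
      exact (hasProjectiveDimensionLE_succ_iff_ker hf n).mpr ((ih _).mp hker)
    · intro h
      have hcover := Finsupp.linearCombination_id_surjective R M
      exact ⟨M →₀ R, inferInstance, inferInstance, inferInstance, _, hcover,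
        (ih _).mpr ((hasProjectiveDimensionLE_succ_iff_ker hcover n).mp h)⟩

theorem projDim_eq_of_projectiveDimension_eq {M : Type u} [AddCommGroup M] [Module R M] {n : ℕ}
    (h : projectiveDimension (ModuleCat.of R M) = n) : projDim R M = n := by
  have hPdLE (k : ℕ) : PdLE R k M ↔ n ≤ k := by
    rw [pdLE_iff_hasProjectiveDimensionLE, ← projectiveDimension_le_iff, h]
    exact_mod_cast Iff.rfl
  apply IsLeast.csInf_eq
  exact ⟨⟨n, (hPdLE n).mpr le_rfl, rfl⟩,
    Set.forall_mem_image.mpr fun k hk ↦ Nat.cast_le.mpr ((hPdLE k).mp hk)⟩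

theorem hasProjectiveDimensionLE_baseChange {A : Type u} [CommRing A] [Algebra R A]
    [Module.Flat R A] (n : ℕ) (M : Type u) [AddCommGroup M] [Module R M]
    (h : HasProjectiveDimensionLE (ModuleCat.of R M) n) :
    HasProjectiveDimensionLE (ModuleCat.of A (A ⊗[R] M)) n := by
  induction n generalizing M with
  | zero =>
    rw [← projective_iff_hasProjectiveDimensionLE_zero_of] at h ⊢
    infer_instance
  | succ n ih =>
    have hcover := Finsupp.linearCombination_id_surjective R M
    have hcover' : Function.Surjective ((Finsupp.linearCombination R (id : M → M)).baseChange A) :=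
      LinearMap.lTensor_surjective A hcover
    rw [hasProjectiveDimensionLE_succ_iff_ker hcover] at h
    rw [hasProjectiveDimensionLE_succ_iff_ker hcover']
    have := ih _ h
    exact ModuleCat.hasProjectiveDimensionLE_of_linearEquiv.{u, u}
      (M := ModuleCat.of A (A ⊗[R] LinearMap.ker (Finsupp.linearCombination R (id : M → M))))
      (LinearMap.tensorKerEquiv A A (Finsupp.linearCombination R (id : M → M))) n

theorem projectiveDimension_baseChange_le (A : Type u) [CommRing A] [Algebra R A]
    [Module.Flat R A] (M : Type u) [AddCommGroup M] [Module R M] :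
    projectiveDimension (ModuleCat.of A (A ⊗[R] M)) ≤ projectiveDimension (ModuleCat.of R M) := by
  refine le_of_forall_ge fun d hd ↦ ?_
  induction d with
  | bot =>
    rw [le_bot_iff, projectiveDimension_eq_bot_iff, ModuleCat.isZero_iff_subsingleton] at hd ⊢
    have : Subsingleton M := hd
    infer_instance
  | coe d =>
    induction d with
    | top => exact le_top
    | coe n =>
      rw [WithBot.coe_natCast, projectiveDimension_le_iff] at hd ⊢
      exact hasProjectiveDimensionLE_baseChange n M hd

theorem length_le_projectiveDimension_quotient [IsNoetherianRing R] {rs : List R}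
    (hrs : IsRegular R rs) :
    rs.length ≤ projectiveDimension (ModuleCat.of R (R ⧸ Ideal.ofList rs)) := by
  obtain ⟨p, hp, hle⟩ := Ideal.exists_le_maximal (Ideal.ofList rs)
    (by simpa [eq_comm] using hrs.top_ne_smul)
  let A := Localization.AtPrime p
  let rsA := rs.map (algebraMap R A)
  have hreg : IsRegular A rsA := hrs.toIsWeaklyRegular.isRegular_of_isLocalization_of_mem A p
    fun r hr ↦ hle (Ideal.subset_span hr)
  let e : Shrink.{u} (A ⧸ Ideal.ofList rsA) ≃ₗ[A] A ⊗[R] (R ⧸ Ideal.ofList rs) :=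
    Shrink.linearEquiv A _ ≪≫ₗ
      (Ideal.quotientEquivAlgOfEq A (Ideal.map_ofList _ rs).symm).toLinearEquiv ≪≫ₗ
      (Algebra.TensorProduct.quotIdealMapEquivTensorQuot A (Ideal.ofList rs)).toLinearEquiv
  calc (rs.length : WithBot ℕ∞)
      = projectiveDimension (ModuleCat.of A (Shrink.{u} (A ⧸ Ideal.ofList rsA))) := by
        rw [ModuleCat.projectiveDimension_quotient_eq_length rsA hreg, List.length_map]
    _ = projectiveDimension (ModuleCat.of A (A ⊗[R] (R ⧸ Ideal.ofList rs))) :=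
        projectiveDimension_eq_of_iso e.toModuleIso
    _ ≤ projectiveDimension (ModuleCat.of R (R ⧸ Ideal.ofList rs)) :=
        projectiveDimension_baseChange_le A _

end ProjectiveDimension

section HilbertSyzygy

open scoped Polynomial

variable {R : Type u} [CommRing R]

section CharMap

variable {M : Type*} [AddCommGroup M] [Module R M]

/-- The endomorphism `X - t` of `R[X] ⊗ M` attached to an endomorphism `t` of `M`. When `t` is
multiplication by `X` on an `R[X]`-module `M`, its cokernel is `M`. -/
noncomputable def charMap (t : Module.End R M) : R[X] ⊗[R] M →ₗ[R[X]] R[X] ⊗[R] M :=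
  LinearMap.lsmul R[X] _ Polynomial.X - t.baseChange R[X]

/-- The quotient of `X ^ k ⊗ m` in the division by `X - t`, given by Horner's scheme. -/
noncomputable def powDivCharMap (t : Module.End R M) : ℕ → M →ₗ[R] R[X] ⊗[R] M
  | 0 => 0
  | k + 1 => TensorProduct.mk R R[X] M (Polynomial.X ^ k) + powDivCharMap t k ∘ₗ t

/-- The quotient in the division by `X - t` on `R[X] ⊗ M`. It is only `R`-linear, and is a
contracting homotopy of the complex `R[X] ⊗ M → R[X] ⊗ M → M` when `t` is multiplication
by `X`. -/
noncomputable def divCharMap (t : Module.End R M) : R[X] ⊗[R] M →ₗ[R] R[X] ⊗[R] M :=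
  TensorProduct.lift ((Polynomial.basisMonomials R).constr R (powDivCharMap t))

theorem tensorProduct_polynomial_hom_ext {N : Type*} [AddCommGroup N] [Module R N]
    {f g : R[X] ⊗[R] M →ₗ[R] N}
    (h : ∀ (k : ℕ) (m : M), f ((Polynomial.X ^ k) ⊗ₜ m) = g ((Polynomial.X ^ k) ⊗ₜ m)) :
    f = g := by
  refine TensorProduct.ext ((Polynomial.basisMonomials R).ext fun k ↦ LinearMap.ext fun m ↦ ?_)
  simpa [← Polynomial.X_pow_eq_monomial] using h k m

theorem charMap_tmul (t : Module.End R M) (p : R[X]) (m : M) :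
    charMap t (p ⊗ₜ m) = (Polynomial.X * p) ⊗ₜ m - p ⊗ₜ t m := by
  simp [charMap, TensorProduct.smul_tmul']

theorem divCharMap_X_pow_tmul (t : Module.End R M) (k : ℕ) (m : M) :
    divCharMap t ((Polynomial.X ^ k) ⊗ₜ m) = powDivCharMap t k m := by
  have hk : Polynomial.basisMonomials R k = Polynomial.X ^ k := by
    simp [Polynomial.X_pow_eq_monomial]
  rw [divCharMap, TensorProduct.lift.tmul, ← hk, Module.Basis.constr_basis]

theorem leftInverse_divCharMap_charMap (t : Module.End R M) :
    Function.LeftInverse (divCharMap t) (charMap t) := by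
  suffices divCharMap t ∘ₗ (charMap t).restrictScalars R = LinearMap.id from
    LinearMap.congr_fun this
  refine tensorProduct_polynomial_hom_ext fun k m ↦ ?_
  simp [charMap_tmul, ← pow_succ', divCharMap_X_pow_tmul, powDivCharMap]

variable [Module R[X] M] {t : Module.End R M}

theorem charMap_powDivCharMap (ht : ∀ m, t m = (Polynomial.X : R[X]) • m) (k : ℕ) (m : M) :
    charMap t (powDivCharMap t k m) =
      (Polynomial.X ^ k) ⊗ₜ m - 1 ⊗ₜ ((Polynomial.X ^ k : R[X]) • m) := by
  induction k generalizing m with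
  | zero => simp [powDivCharMap]
  | succ k ih => simp [powDivCharMap, charMap_tmul, ih, ht, smul_smul, ← pow_succ, ← pow_succ']

variable [IsScalarTower R R[X] M]

theorem charMap_divCharMap (ht : ∀ m, t m = (Polynomial.X : R[X]) • m) (z : R[X] ⊗[R] M) :
    charMap t (divCharMap t z) =
      z - 1 ⊗ₜ LinearMap.liftBaseChange R[X] (LinearMap.id : M →ₗ[R] M) z := by
  suffices h : (charMap t).restrictScalars R ∘ₗ divCharMap t =
      LinearMap.id - TensorProduct.mk R R[X] M 1 ∘ₗ
        (LinearMap.liftBaseChange R[X] LinearMap.id).restrictScalars R from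
    LinearMap.congr_fun h z
  refine tensorProduct_polynomial_hom_ext fun k m ↦ ?_
  simp [divCharMap_X_pow_tmul, charMap_powDivCharMap ht]

theorem exact_charMap (ht : ∀ m, t m = (Polynomial.X : R[X]) • m) :
    Function.Exact (charMap t) (LinearMap.liftBaseChange R[X] (LinearMap.id : M →ₗ[R] M)) := by
  refine LinearMap.exact_of_comp_eq_zero_of_ker_le_range ?_ fun z hz ↦ ?_
  · ext m
    simp [charMap_tmul, ht]
  · exact ⟨divCharMap t z, by rw [charMap_divCharMap ht, LinearMap.mem_ker.mp hz,
      TensorProduct.tmul_zero, sub_zero]⟩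

end CharMap

/-- The ring `R` has global dimension at most `n`, tested on modules in the universe of `R`. -/
def GlobalDimLE (R : Type u) [CommRing R] (n : ℕ) : Prop :=
  ∀ M : ModuleCat.{u} R, HasProjectiveDimensionLE M n

theorem globalDimLE_polynomial {n : ℕ} (h : GlobalDimLE R n) : GlobalDimLE R[X] (n + 1) := by
  intro M
  let _ : Module R M := Module.compHom M (algebraMap R R[X])
  have : IsScalarTower R R[X] M := .of_algebraMap_smul fun _ _ ↦ rfl
  have hbase := hasProjectiveDimensionLE_baseChange (A := R[X]) n M (h _)
  let ε := LinearMap.liftBaseChange R[X] (LinearMap.id : M →ₗ[R] M)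
  have hε : Function.Surjective ε := fun m ↦ ⟨1 ⊗ₜ m, by simp [ε]⟩
  have hexact : Function.Exact (charMap (Algebra.lsmul R R M (Polynomial.X : R[X]))) ε :=
    exact_charMap fun _ ↦ rfl
  have hS : (ModuleCat.shortComplexOfCompEqZero _ _ hexact.linearMap_comp_eq_zero).ShortExact :=
    { exact := ModuleCat.shortComplex_exact _ hexact
      mono_f := (ModuleCat.mono_iff_injective _).mpr (leftInverse_divCharMap_charMap _).injective
      epi_g := (ModuleCat.epi_iff_surjective _).mpr hε }
  exact hS.hasProjectiveDimensionLT_X₃ (n + 1) hbase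
    (hasProjectiveDimensionLT_of_ge _ (n + 1) (n + 2) (Nat.le_succ _))

attribute [local instance] RingHomInvPair.of_ringEquiv in
theorem globalDimLE_of_ringEquiv {S : Type u} [CommRing S] {n : ℕ} (e : R ≃+* S)
    (h : GlobalDimLE R n) : GlobalDimLE S n := by
  intro M
  let _ : Module R M := Module.compHom M e.toRingHom
  have := h (ModuleCat.of R M)
  let e' : ModuleCat.of R M ≃ₛₗ[RingHomClass.toRingHom e] M :=
    { AddEquiv.refl M with map_smul' := fun _ _ ↦ rfl }
  exact ModuleCat.hasProjectiveDimensionLE_of_semiLinearEquiv.{u, u} e e' n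

theorem globalDimLE_zero_of_field (K : Type u) [Field K] : GlobalDimLE K 0 := fun M ↦
  (projective_iff_hasProjectiveDimensionLE_zero_of M).mp inferInstance

theorem globalDimLE_mvPolynomial {d : ℕ} (h : GlobalDimLE R d) (σ : Type) [Fintype σ] :
    GlobalDimLE (MvPolynomial σ R) (d + Fintype.card σ) := by
  suffices hFin : ∀ n, GlobalDimLE (MvPolynomial (Fin n) R) (d + n) from
    globalDimLE_of_ringEquiv (renameEquiv R (Fintype.equivFin σ).symm).toRingEquiv (hFin _)
  intro n
  induction n with
  | zero => exact globalDimLE_of_ringEquiv (isEmptyRingEquiv R (Fin 0)).symm h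
  | succ n ih =>
    exact globalDimLE_of_ringEquiv (finSuccEquiv R n).toRingEquiv.symm (globalDimLE_polynomial ih)

end HilbertSyzygy

section Socle

section

variable {R : Type u} [CommRing R]

theorem exists_injective_quotient_of_isMaximal {I J : Ideal R} (hJ : J.IsMaximal) {s : R}
    (hs : s ∉ I) (hJs : ∀ f ∈ J, f * s ∈ I) :
    ∃ φ : (R ⧸ J) →ₗ[R] R ⧸ I, Function.Injective φ := by
  have : IsSimpleModule R (R ⧸ J) := isSimpleModule_iff_isCoatom.mpr hJ.out
  let φ : (R ⧸ J) →ₗ[R] R ⧸ I :=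
    Submodule.liftQ J (LinearMap.toSpanSingleton R (R ⧸ I) (Ideal.Quotient.mk I s))
      fun f hf ↦ Ideal.Quotient.eq_zero_iff_mem.mpr (hJs f hf)
  have hφ : φ (Ideal.Quotient.mk J 1) = Ideal.Quotient.mk I s :=
    one_smul R (Ideal.Quotient.mk I s)
  refine ⟨φ, φ.injective_or_eq_zero.resolve_right fun h0 ↦ hs ?_⟩
  rw [← Ideal.Quotient.eq_zero_iff_mem, ← hφ, h0, LinearMap.zero_apply]

theorem le_projectiveDimension_of_injective {n : ℕ} (hR : GlobalDimLE R n) {N M : Type u}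
    [AddCommGroup N] [Module R N] [AddCommGroup M] [Module R M] {φ : N →ₗ[R] M}
    (hφ : Function.Injective φ) (hN : n ≤ projectiveDimension (ModuleCat.of R N)) :
    n ≤ projectiveDimension (ModuleCat.of R M) := by
  rw [projectiveDimension_ge_iff] at hN ⊢
  intro hM
  have hexact := LinearMap.exact_map_mkQ_range φ
  have hS : (ModuleCat.shortComplexOfCompEqZero _ _ hexact.linearMap_comp_eq_zero).ShortExact :=
    { exact := ModuleCat.shortComplex_exact _ hexact
      mono_f := (ModuleCat.mono_iff_injective _).mpr hφ
      epi_g := (ModuleCat.epi_iff_surjective _).mpr (Submodule.mkQ_surjective _) }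
  exact hN (hS.hasProjectiveDimensionLT_X₁ n hM (hR _))

end

theorem isWeaklyRegular_map_X (R : Type*) [CommRing R] {σ : Type*} {l : List σ} (hl : l.Nodup) :
    IsWeaklyRegular (MvPolynomial σ R) (l.map (X : σ → MvPolynomial σ R)) := by
  have hmem (i : ℕ) (f : MvPolynomial σ R) :
      f ∈ Ideal.ofList ((l.map (X : σ → MvPolynomial σ R)).take i) ↔
        ∀ m ∈ f.support, ∃ j ∈ {j | j ∈ l.take i}, m j ≠ 0 := by
    rw [← mem_ideal_span_X_image, Ideal.ofList]
    congr!
    ext g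
    simp [← List.map_take]
  refine (isWeaklyRegular_iff _ _).mpr fun i hi ↦ ?_
  have hi' : i < l.length := by simpa using hi
  have hnotMem : l[i] ∉ l.take i := fun h ↦ by
    obtain ⟨k, hk, hki⟩ := List.mem_take_iff_getElem.mp h
    have := hl.getElem_inj_iff.mp hki
    lia
  refine (isSMulRegular_quotient_iff_mem_of_smul_mem _ _).mpr fun f hf ↦ ?_
  simp only [List.getElem_map, smul_eq_mul, Ideal.mul_top, hmem] at hf ⊢
  intro m hm
  obtain ⟨j, hj, hne⟩ := hf (Finsupp.single l[i] 1 + m) (by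
    rwa [mem_support_iff, coeff_X_mul, ← mem_support_iff])
  have hij : l[i] ≠ j := fun h ↦ hnotMem (h ▸ hj)
  exact ⟨j, hj, by simpa [Finsupp.single_apply, hij] using hne⟩

variable {K : Type u} [Field K] {σ : Type}

theorem mem_maxIdeal_iff {f : MvPolynomial σ K} : f ∈ maxIdeal K σ ↔ constantCoeff f = 0 := by
  rw [maxIdeal, ← pow_one (Ideal.span _), mem_pow_idealOfVars_iff']
  simp [constantCoeff_eq, Finsupp.degree_eq_zero_iff]

theorem maxIdeal_isMaximal (K : Type u) [Field K] (σ : Type) : (maxIdeal K σ).IsMaximal := by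
  have : maxIdeal K σ = RingHom.ker (constantCoeff (R := K) (σ := σ)) :=
    Ideal.ext fun _ ↦ mem_maxIdeal_iff
  rw [this]
  exact RingHom.ker_isMaximal_of_surjective _ fun a ↦ ⟨C a, constantCoeff_C σ a⟩

theorem card_le_projectiveDimension_quotient_maxIdeal (K : Type u) [Field K] (σ : Type)
    [Fintype σ] : Fintype.card σ ≤
      projectiveDimension (ModuleCat.of (MvPolynomial σ K) (MvPolynomial σ K ⧸ maxIdeal K σ)) := by
  let vars : List (MvPolynomial σ K) := Finset.univ.toList.map X
  have hvars : Ideal.ofList vars = maxIdeal K σ :=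
    congrArg Ideal.span (Set.ext fun f ↦ by simp [vars])
  have hreg : IsRegular (MvPolynomial σ K) vars :=
    { isWeaklyRegular_map_X K (Finset.nodup_toList _) with
      top_ne_smul := by
        simpa [hvars, eq_comm] using (maxIdeal_isMaximal K σ).ne_top }
  have hlength := length_le_projectiveDimension_quotient hreg
  rw [hvars] at hlength
  simpa [vars] using hlength

theorem projectiveDimension_quotient_eq_card_of_socle [Fintype σ] {I : Ideal (MvPolynomial σ K)}
    {s : MvPolynomial σ K} (hs : s ∉ I)
    (hsoc : ∀ f ∈ maxIdeal K σ, f * s ∈ I) :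
    projectiveDimension (ModuleCat.of (MvPolynomial σ K) (MvPolynomial σ K ⧸ I)) =
      Fintype.card σ := by
  have hdim : GlobalDimLE (MvPolynomial σ K) (Fintype.card σ) := by
    simpa using globalDimLE_mvPolynomial (globalDimLE_zero_of_field K) σ
  obtain ⟨φ, hφ⟩ := exists_injective_quotient_of_isMaximal (maxIdeal_isMaximal K σ) hs hsoc
  exact le_antisymm ((projectiveDimension_le_iff _ _).mpr (hdim _))
    (le_projectiveDimension_of_injective hdim hφ
      (card_le_projectiveDimension_quotient_maxIdeal K σ))

end Socle

section SocleQuadrics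

/-- The ideal `(x², y²) + (aⱼ x + bⱼ y)ⱼ`, for which `xy` is killed by `x`, `y` and all `aⱼ`,
`bⱼ` modulo the ideal. The theorem is the case where `x`, `y`, `aⱼ`, `bⱼ` are distinct
variables. -/
def socleQuadrics {A ι : Type*} [CommRing A] (x y : A) (a b : ι → A) : Ideal A :=
  Ideal.span ({x ^ 2, y ^ 2} ∪ Set.range fun j ↦ a j * x + b j * y)

section

variable {A ι : Type*} [CommRing A] (x y : A) (a b : ι → A)

theorem sq_left_mem_socleQuadrics : x ^ 2 ∈ socleQuadrics x y a b :=
  Ideal.subset_span (by simp)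

theorem sq_right_mem_socleQuadrics : y ^ 2 ∈ socleQuadrics x y a b :=
  Ideal.subset_span (by simp)

theorem add_mem_socleQuadrics (j : ι) : a j * x + b j * y ∈ socleQuadrics x y a b :=
  Ideal.subset_span (by simp)

theorem left_mul_mem_socleQuadrics (j : ι) : a j * (x * y) ∈ socleQuadrics x y a b := by
  have h : a j * (x * y) = y * (a j * x + b j * y) - b j * y ^ 2 := by ring
  rw [h]
  exact sub_mem (Ideal.mul_mem_left _ _ (add_mem_socleQuadrics x y a b j))
    (Ideal.mul_mem_left _ _ (sq_right_mem_socleQuadrics x y a b))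

theorem right_mul_mem_socleQuadrics (j : ι) : b j * (x * y) ∈ socleQuadrics x y a b := by
  have h : b j * (x * y) = x * (a j * x + b j * y) - a j * x ^ 2 := by ring
  rw [h]
  exact sub_mem (Ideal.mul_mem_left _ _ (add_mem_socleQuadrics x y a b j))
    (Ideal.mul_mem_left _ _ (sq_left_mem_socleQuadrics x y a b))

theorem mul_mem_socleQuadrics_of_mem_span {f : A}
    (hf : f ∈ Ideal.span ({x, y} ∪ (Set.range a ∪ Set.range b))) :
    f * (x * y) ∈ socleQuadrics x y a b := by
  have hx : x * (x * y) ∈ socleQuadrics x y a b := by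
    simpa only [sq, mul_assoc] using
      Ideal.mul_mem_right y _ (sq_left_mem_socleQuadrics x y a b)
  have hy : y * (x * y) ∈ socleQuadrics x y a b := by
    simpa only [sq, mul_left_comm] using
      Ideal.mul_mem_left _ x (sq_right_mem_socleQuadrics x y a b)
  suffices hle : Ideal.span ({x, y} ∪ (Set.range a ∪ Set.range b)) ≤
      (socleQuadrics x y a b).colon {x * y} from Submodule.mem_colon_singleton.mp (hle hf)
  rw [Ideal.span_le]
  rintro _ ((rfl | rfl) | ⟨j, rfl⟩ | ⟨j, rfl⟩) <;> refine Submodule.mem_colon_singleton.mpr ?_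
  exacts [hx, hy, left_mul_mem_socleQuadrics x y a b j, right_mul_mem_socleQuadrics x y a b j]

end

theorem mul_notMem_socleQuadrics_X (R : Type*) [CommRing R] [Nontrivial R] (ι : Type*) :
    (X (Sum.inl 0) * X (Sum.inl 1) : MvPolynomial (Fin 2 ⊕ Fin 2 × ι) R) ∉
      socleQuadrics (X (Sum.inl 0)) (X (Sum.inl 1))
        (fun j ↦ X (Sum.inr (0, j))) (fun j ↦ X (Sum.inr (1, j))) := by
  -- Evaluate at `x = ε`, `y = δ`, `aᵢⱼ = 0` in `R[ε, δ] / (ε², δ²)`.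
  let φ : MvPolynomial (Fin 2 ⊕ Fin 2 × ι) R →ₐ[R] DualNumber (DualNumber R) :=
    aeval (Sum.elim ![TrivSqZeroExt.inl (DualNumber.eps : DualNumber R), DualNumber.eps] 0)
  have hker : socleQuadrics (X (Sum.inl 0)) (X (Sum.inl 1))
      (fun j ↦ X (Sum.inr (0, j))) (fun j ↦ X (Sum.inr (1, j))) ≤ RingHom.ker φ := by
    rw [socleQuadrics, Ideal.span_le]
    rintro _ ((rfl | rfl) | ⟨j, rfl⟩) <;> simp [φ, sq, ← TrivSqZeroExt.inl_mul]
  have hφ : φ (X (Sum.inl 0) * X (Sum.inl 1)) ≠ 0 := fun h ↦ by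
    simpa [φ] using congrArg (fun z ↦ z.snd.snd) h
  exact fun h ↦ hφ (hker h)

theorem maxIdeal_le_span_X {K : Type*} [Field K] {ι : Type*} :
    maxIdeal K (Fin 2 ⊕ Fin 2 × ι) ≤
      Ideal.span ({X (Sum.inl 0), X (Sum.inl 1)} ∪
        (Set.range (fun j ↦ X (Sum.inr (0, j))) ∪ Set.range fun j ↦ X (Sum.inr (1, j)))) := by
  refine Ideal.span_mono ?_
  rintro _ ⟨i | ⟨i, j⟩, rfl⟩ <;> fin_cases i <;> simp

end SocleQuadrics

/-- for `n = m + 2 ≥ 2`, in `R = K[x, y, a₁₁, …, a₂,(n-2)]`, the ideal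
`I = (x², y², a₁₁x + a₂₁y, …)` has `pd(R/I) = 2n - 2`; equivalently `xy` is a nonzero
socle element of `R/I`. Here `x = X (inl 0)`, `y = X (inl 1)`, `aᵢⱼ = X (inr (i, j))`. -/
theorem stmt1 (K : Type u) [Field K] (m : ℕ)
    (I : Ideal (MvPolynomial (Fin 2 ⊕ Fin 2 × Fin m) K))
    (hI : I = Ideal.span
      ({X (Sum.inl 0) ^ 2, X (Sum.inl 1) ^ 2} ∪
        Set.range fun j : Fin m =>
          X (Sum.inr (0, j)) * X (Sum.inl 0) + X (Sum.inr (1, j)) * X (Sum.inl 1))) :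
    projDim (MvPolynomial (Fin 2 ⊕ Fin 2 × Fin m) K) (MvPolynomial (Fin 2 ⊕ Fin 2 × Fin m) K ⧸ I) = ((2 * (m + 2) - 2 : ℕ) : ℕ∞) ∧
      X (Sum.inl 0) * X (Sum.inl 1) ∉ I ∧
      ∀ f ∈ maxIdeal K (Fin 2 ⊕ Fin 2 × Fin m),
        f * (X (Sum.inl 0) * X (Sum.inl 1)) ∈ I := by
  subst hI
  have hxy := mul_notMem_socleQuadrics_X K (Fin m)
  have hsoc : ∀ f ∈ maxIdeal K (Fin 2 ⊕ Fin 2 × Fin m), f * (X (Sum.inl 0) * X (Sum.inl 1)) ∈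
      socleQuadrics (X (Sum.inl 0)) (X (Sum.inl 1))
        (fun j : Fin m ↦ X (Sum.inr (0, j))) (fun j ↦ X (Sum.inr (1, j))) :=
    fun f hf ↦ mul_mem_socleQuadrics_of_mem_span _ _ _ _ (maxIdeal_le_span_X hf)
  have hcard : Fintype.card (Fin 2 ⊕ Fin 2 × Fin m) = 2 * (m + 2) - 2 := by
    simp only [Fintype.card_sum, Fintype.card_prod, Fintype.card_fin]
    lia
  refine ⟨projDim_eq_of_projectiveDimension_eq ?_, hxy, hsoc⟩
  rw [← hcard]
  exact projectiveDimension_quotient_eq_card_of_socle hxy hsoc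
end

section
/- Let R be a polynomial ring over a field K and let I be an ideal of R minimally generated by n ≥ 3 quadrics with ht(I) = 2. Then the Hilbert–Samuel multiplicity satisfies e(R/I) ≤ 3. -/
open MvPolynomial Filter

universe u

/-!
Since `I` has height two and `K` is large enough, `I` contains two coprime forms `q₁`, `q₂` of
degree `D`, and they generate a complete intersection `J` of multiplicity `D ^ 2`. As `J` is
unmixed, `J : z` has the same dimension as `J` for every form `z ∈ I` outside `J`. The Hilbert
function of `R/(J : z)`, shifted by `deg z`, is the difference of those of `R/J` and `R/(J + (z))`,
so adding `z` already lowers the multiplicity by at least one.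

Unmixedness is obtained by hand: after a linear change of coordinates `q₁` is monic in one
variable, `B = A[x]/(q₁)` is a free module of finite rank over the polynomial ring `A` in the other
variables, and `q₂` acts injectively on it. If some `a ≠ 0` in `A` multiplies `z` into `q₂B`, then
every other such multiplier shares a prime factor with `a`: coprime `a`, `b` with `az, bz ∈ q₂B`
force `z ∈ q₂B` because `B` is free. By prime avoidance all multipliers lie in one principal prime
`(π)`, so the polynomials in the variables of `A` other than one occurring in `π` meet `J : z` only
in zero.
-/

section Unmixed

variable {A : Type*} [CommRing A]

lemma exists_eq_smul_of_isRelPrime [DecompositionMonoid A] {M : Type*} [AddCommGroup M] [Module A M]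
    [Module.Free A M] {a b : A} (hab : IsRelPrime a b) {s t : M} (h : b • s = a • t) :
    ∃ r : M, s = a • r := by
  let v := Module.Free.chooseBasis A M
  have hdvd : ∀ i, a ∣ v.repr s i := fun i =>
    hab.dvd_of_dvd_mul_left ⟨v.repr t i, by simpa using congrArg (fun m => v.repr m i) h⟩
  choose c hc using hdvd
  refine ⟨∑ i ∈ (v.repr s).support, c i • v i, ?_⟩
  conv_lhs => rw [← v.linearCombination_repr s, Finsupp.linearCombination_apply, Finsupp.sum]
  simp only [Finset.smul_sum, smul_smul, hc]

lemma exists_smul_mem_range [IsDomain A] {M : Type*} [AddCommGroup M] [Module A M]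
    [Module.Finite A M] {f : M →ₗ[A] M} (hf : Function.Injective f) (z : M) :
    ∃ a : A, a ≠ 0 ∧ a • z ∈ LinearMap.range f := by
  have hrank : Module.finrank A (M ⧸ LinearMap.range f) = 0 := by
    have := (LinearMap.range f).finrank_quotient_add_finrank
    rw [LinearMap.finrank_range_of_inj hf] at this
    omega
  obtain ⟨a, ha⟩ := (Module.finrank_eq_zero_iff_isTorsion.1 hrank) (x := Submodule.Quotient.mk z)
  exact ⟨a, nonZeroDivisors.ne_zero a.2, (Submodule.Quotient.mk_eq_zero _).1 ha⟩

variable [IsDomain A] [UniqueFactorizationMonoid A]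

lemma mem_range_of_isRelPrime_smul_mem {M M' : Type*} [AddCommGroup M] [Module A M]
    [Module.Free A M] [AddCommGroup M'] [Module A M'] [Module.IsTorsionFree A M'] {f : M →ₗ[A] M'}
    (hf : Function.Injective f) {a b : A} (ha : a ≠ 0) (hab : IsRelPrime a b) {z : M'}
    (haz : a • z ∈ LinearMap.range f) (hbz : b • z ∈ LinearMap.range f) :
    z ∈ LinearMap.range f := by
  obtain ⟨s, hs⟩ := haz
  obtain ⟨t, ht⟩ := hbz
  obtain ⟨r, rfl⟩ := exists_eq_smul_of_isRelPrime hab (s := s) (t := t)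
    (hf (by rw [map_smul, map_smul, hs, ht, smul_comm]))
  exact ⟨r, smul_right_injective M' ha (by rwa [map_smul] at hs)⟩

lemma exists_prime_forall_dvd_of_forall_not_isRelPrime {p : Ideal A} {a : A} (ha : a ≠ 0)
    (h : ∀ b ∈ p, ¬ IsRelPrime a b) : ∃ π : A, Prime π ∧ ∀ b ∈ p, π ∣ b := by
  classical
  let s := (UniqueFactorizationMonoid.factors a).toFinset
  have hs : ∀ i ∈ s, Prime i := fun i hi =>
    UniqueFactorizationMonoid.prime_of_factor i (Multiset.mem_toFinset.1 hi)
  have hsub : (p : Set A) ⊆ ⋃ i ∈ (s : Set A), ((Ideal.span {i} : Ideal A) : Set A) := by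
    intro b hb
    have hb' := h b hb
    rw [UniqueFactorizationMonoid.isRelPrime_iff_no_prime_factors ha] at hb'
    push Not at hb'
    obtain ⟨d, hda, hdb, hd⟩ := hb'
    obtain ⟨q, hq, hdq⟩ :=
      UniqueFactorizationMonoid.exists_mem_factors_of_dvd ha hd.irreducible hda
    exact Set.mem_biUnion (Multiset.mem_toFinset.2 hq)
      (Ideal.mem_span_singleton.2 (hdq.symm.dvd.trans hdb))
  obtain ⟨i, hi, hle⟩ := (Ideal.subset_union_prime (f := fun i : A => Ideal.span {i}) 0 0
    (fun i hi _ _ => (Ideal.span_singleton_prime (hs i hi).ne_zero).2 (hs i hi))).1 hsub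
  exact ⟨i, hs i hi, fun b hb => Ideal.mem_span_singleton.1 (hle hb)⟩

lemma exists_prime_forall_dvd_of_smul_mem_range {M : Type*} [AddCommGroup M] [Module A M]
    [Module.Free A M] [Module.Finite A M] {f : M →ₗ[A] M} (hf : Function.Injective f) {z : M}
    (hz : z ∉ LinearMap.range f) :
    ∃ π : A, Prime π ∧ ∀ a : A, a • z ∈ LinearMap.range f → π ∣ a := by
  obtain ⟨a, ha, haz⟩ := exists_smul_mem_range hf z
  obtain ⟨π, hπ, hdvd⟩ := exists_prime_forall_dvd_of_forall_not_isRelPrime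
    (p := (LinearMap.range f).colon {z}) ha fun b hb hab =>
      hz (mem_range_of_isRelPrime_smul_mem hf ha hab haz (Submodule.mem_colon_singleton.1 hb))
  exact ⟨π, hπ, fun b hb => hdvd b (Submodule.mem_colon_singleton.2 hb)⟩

lemma exists_prime_forall_dvd_of_C_mul_mem_span_pair {F G Z : Polynomial A} (hF : F.Monic)
    (hFG : IsRelPrime F G) (hZ : Z ∉ Ideal.span {F, G}) :
    ∃ π : A, Prime π ∧ ∀ a : A, Polynomial.C a * Z ∈ Ideal.span {F, G} → π ∣ a := by
  have := hF.free_quotient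
  have := hF.finite_quotient
  let f := LinearMap.mulLeft A (Ideal.Quotient.mk (Ideal.span {F}) G)
  have hf : Function.Injective f := by
    rw [injective_iff_map_eq_zero]
    intro x hx
    obtain ⟨H, rfl⟩ := Ideal.Quotient.mk_surjective x
    rw [LinearMap.mulLeft_apply, ← map_mul, Ideal.Quotient.eq_zero_iff_dvd] at hx
    exact (Ideal.Quotient.eq_zero_iff_dvd _ _).2 (hFG.dvd_of_dvd_mul_left hx)
  have hmem : ∀ H : Polynomial A,
      Ideal.Quotient.mk (Ideal.span {F}) H ∈ LinearMap.range f ↔ H ∈ Ideal.span {F, G} := by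
    intro H
    rw [LinearMap.mem_range, Ideal.Quotient.mk_surjective.exists]
    simp only [f, LinearMap.mulLeft_apply, ← map_mul, Ideal.Quotient.mk_eq_mk_iff_sub_mem,
      Ideal.mem_span_singleton, Ideal.mem_span_pair]
    constructor
    · rintro ⟨B, C, hC⟩
      exact ⟨-C, B, by linear_combination hC⟩
    · rintro ⟨B, C, rfl⟩
      exact ⟨C, -B, by ring⟩
  obtain ⟨π, hπ, hdvd⟩ := exists_prime_forall_dvd_of_smul_mem_range hf (mt (hmem Z).1 hZ)
  refine ⟨π, hπ, fun a ha => hdvd a ?_⟩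
  rwa [← hmem, ← Polynomial.smul_eq_C_mul] at ha

end Unmixed

section Elimination

lemma isRelPrime_map {A B E : Type*} [Monoid A] [Monoid B] [EquivLike E A B] [MulEquivClass E A B]
    (e : E) {a b : A} (h : IsRelPrime a b) : IsRelPrime (e a) (e b) := by
  intro D h₁ h₂
  obtain ⟨D, rfl⟩ := EquivLike.surjective e D
  exact (h ((map_dvd_iff e).1 h₁) ((map_dvd_iff e).1 h₂)).map e

lemma map_mem_span_pair_iff {A B E : Type*} [CommRing A] [CommRing B] [EquivLike E A B]
    [RingEquivClass E A B] (e : E) {a b x : A} :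
    e x ∈ Ideal.span {e a, e b} ↔ x ∈ Ideal.span {a, b} := by
  rw [← Set.image_pair, ← Ideal.map_span, Ideal.mem_map_of_equiv]
  simp

lemma exists_forall_eq_zero_of_dvd_of_notMem_vars {K σ : Type*} [Field K] {p : MvPolynomial σ K}
    (hp₀ : p ≠ 0) (hp : ¬ IsUnit p) :
    ∃ i, ∀ f : MvPolynomial σ K, i ∉ f.vars → p ∣ f → f = 0 := by
  obtain ⟨i, hi⟩ : p.vars.Nonempty := by
    rw [Finset.nonempty_iff_ne_empty, Ne, vars_eq_empty_iff_eq_C]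
    intro h
    refine hp (h ▸ (isUnit_iff_ne_zero.2 fun h₀ => hp₀ ?_).map C)
    rw [h, h₀, C_0]
  refine ⟨i, fun f hf hpf => ?_⟩
  obtain ⟨c, rfl⟩ := hpf
  by_contra hpc
  rw [mem_vars_iff_degreeOf_ne_zero, degreeOf_mul_eq hp₀ (right_ne_zero_of_mul hpc)] at hf
  have := mem_vars_iff_degreeOf_ne_zero.1 hi
  omega

variable {K : Type*} [Field K]

lemma exists_linearEquiv_apply_eq {V : Type*} [AddCommGroup V] [Module K V] {v w : V} (hv : v ≠ 0)
    (hw : w ≠ 0) : ∃ g : V ≃ₗ[K] V, g v = w := by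
  let f := (LinearEquiv.toSpanNonzeroSingleton K V v hv).symm.trans
    (LinearEquiv.toSpanNonzeroSingleton K V w hw)
  obtain ⟨g, hg⟩ := Submodule.exists_linearEquiv_restrict_eq f
  refine ⟨g, ?_⟩
  rw [← hg ⟨v, Submodule.mem_span_singleton_self v⟩]
  simp [f, LinearEquiv.coord_self]

lemma exists_algEquiv_eval_apply_eq {σ : Type*} [Finite σ] {v w : σ → K} (hv : v ≠ 0)
    (hw : w ≠ 0) : ∃ ψ : MvPolynomial σ K ≃ₐ[K] MvPolynomial σ K,
      (∀ k, (ψ (X k)).IsHomogeneous 1) ∧ (∀ k, (ψ.symm (X k)).IsHomogeneous 1) ∧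
      ∀ q, eval w (ψ q) = eval v q := by
  classical
  have := Fintype.ofFinite σ
  obtain ⟨g, hg⟩ := exists_linearEquiv_apply_eq (K := K) hw hv
  let M := LinearMap.toMatrix' g.toLinearMap
  let M' := LinearMap.toMatrix' g.symm.toLinearMap
  have hcomp : ∀ {A B : Matrix σ σ K}, A * B = 1 →
      (bind₁ B.toMvPolynomial).comp (bind₁ A.toMvPolynomial) = AlgHom.id K _ := by
    intro A B hAB
    ext1 i
    rw [AlgHom.comp_apply, bind₁_X_right, ← Matrix.toMvPolynomial_mul, hAB,
      Matrix.toMvPolynomial_one, AlgHom.id_apply]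
  have hMM' : M * M' = 1 := by
    rw [← LinearMap.toMatrix'_comp, LinearEquiv.comp_symm, LinearMap.toMatrix'_id]
  have hM'M : M' * M = 1 := by
    rw [← LinearMap.toMatrix'_comp, LinearEquiv.symm_comp, LinearMap.toMatrix'_id]
  refine ⟨AlgEquiv.ofAlgHom (bind₁ M.toMvPolynomial) (bind₁ M'.toMvPolynomial) (hcomp hM'M)
    (hcomp hMM'), fun k => ?_, fun k => ?_, fun q => ?_⟩
  · simpa using M.toMvPolynomial_isHomogeneous k
  · simpa using M'.toMvPolynomial_isHomogeneous k
  · have hMw : M.mulVec w = v := (LinearMap.toMatrix'_mulVec _ w).trans hg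
    have heval : (fun i => eval w (M.toMvPolynomial i)) = v := by
      simp only [Matrix.toMvPolynomial_eval_eq_apply, hMw]
    exact (eval₂Hom_bind₁ _ _ _ q).trans (congrArg (eval · q) heval)

lemma isHomogeneous_algHom_apply {σ τ : Type*} {φ : MvPolynomial σ K →ₐ[K] MvPolynomial τ K}
    (hφ : ∀ k, (φ (X k)).IsHomogeneous 1) {f : MvPolynomial σ K} {d : ℕ} (hf : f.IsHomogeneous d) :
    (φ f).IsHomogeneous d := by
  have h : φ = aeval fun k => φ (X k) := by ext; simp
  rw [h]
  simpa using hf.aeval (fun k => φ (X k)) hφ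

lemma exists_finSuccEquiv_coeff_eq_C {m a : ℕ} {q : MvPolynomial (Fin (m + 1)) K}
    (hq : q.IsHomogeneous a) (hq₀ : eval (Pi.single 0 1) q ≠ 0) :
    ∃ c : K, c ≠ 0 ∧ (finSuccEquiv K m q).coeff a = C c := by
  have hcons : (Pi.single 0 1 : Fin (m + 1) → K) = Fin.cons 1 0 := by
    ext k
    refine Fin.cases ?_ (fun k => ?_) k <;> simp
  rw [hcons, eval_eq_eval_mv_eval'] at hq₀
  have hdeg : (finSuccEquiv K m q).natDegree ≤ a := by
    rw [natDegree_finSuccEquiv]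
    exact (degreeOf_le_totalDegree _ _).trans hq.totalDegree_le
  rw [Polynomial.eval_eq_sum_range' (n := a + 1)
    ((Polynomial.natDegree_map_le.trans hdeg).trans_lt a.lt_succ_self)] at hq₀
  simp only [Polynomial.coeff_map, one_pow, mul_one] at hq₀
  rw [Finset.sum_range_succ, Finset.sum_eq_zero, zero_add] at hq₀
  · have hC := totalDegree_eq_zero_iff_eq_C.1 (Nat.le_zero.1
      (hq.finSuccEquiv_coeff_isHomogeneous a 0 (add_zero a)).totalDegree_le)
    refine ⟨_, fun h => hq₀ ?_, hC⟩
    rw [hC, h]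
    simp
  · intro i hi
    obtain ⟨j, rfl⟩ := Nat.exists_eq_add_of_lt (Finset.mem_range.1 hi)
    have := (hq.finSuccEquiv_coeff_isHomogeneous i (j + 1) rfl).coeff_eq_zero (d := 0) (by simp)
    simpa [eval_zero, constantCoeff_eq] using this

lemma finSuccEquiv_rename_succ {m : ℕ} (f : MvPolynomial (Fin m) K) :
    finSuccEquiv K m (rename Fin.succ f) = Polynomial.C f := by
  induction f using MvPolynomial.induction_on with
  | C a => simp [finSuccEquiv_apply]
  | add p q hp hq => simp only [map_add, hp, hq]
  | mul_X p i hp => simp only [map_mul, hp, rename_X, finSuccEquiv_X_succ]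

lemma exists_rename_forall_eq_zero {d a : ℕ} {q₁ q₂ z : MvPolynomial (Fin (d + 2)) K}
    (hq₁ : q₁.IsHomogeneous a) (hq₀ : eval (Pi.single 0 1) q₁ ≠ 0) (hrel : IsRelPrime q₁ q₂)
    (hz : z ∉ Ideal.span {q₁, q₂}) :
    ∃ ι : Fin d → Fin (d + 2), ∀ f, rename ι f * z ∈ Ideal.span {q₁, q₂} → f = 0 := by
  let e := finSuccEquiv K (d + 1)
  obtain ⟨c, hc, hcoeff⟩ := exists_finSuccEquiv_coeff_eq_C hq₁ hq₀
  let u : Polynomial (MvPolynomial (Fin (d + 1)) K) := Polynomial.C (C c⁻¹)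
  have hu : IsUnit u := (((isUnit_iff_ne_zero.2 hc).inv.map C).map Polynomial.C)
  have hmonic : (e q₁ * u).Monic := by
    refine Polynomial.monic_of_natDegree_le_of_coeff_eq_one a ?_ ?_
    · refine (Polynomial.natDegree_mul_C_le _ _).trans ?_
      rw [natDegree_finSuccEquiv]
      exact (degreeOf_le_totalDegree _ _).trans hq₁.totalDegree_le
    · rw [Polynomial.coeff_mul_C, hcoeff, ← C_mul, mul_inv_cancel₀ hc, C_1]
  have hrel' : IsRelPrime (e q₁ * u) (e q₂) :=
    (isRelPrime_mul_unit_right_left hu).2 (isRelPrime_map e hrel)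
  have hmem : ∀ x, e x ∈ Ideal.span {e q₁ * u, e q₂} ↔ x ∈ Ideal.span {q₁, q₂} := fun x => by
    rw [Ideal.span_insert, Ideal.span_singleton_mul_right_unit hu, ← Ideal.span_insert,
      map_mem_span_pair_iff]
  obtain ⟨π, hπ, hdvd⟩ :=
    exists_prime_forall_dvd_of_C_mul_mem_span_pair hmonic hrel' (mt (hmem z).1 hz)
  obtain ⟨i, hi⟩ := exists_forall_eq_zero_of_dvd_of_notMem_vars hπ.ne_zero hπ.not_isUnit
  refine ⟨Fin.succ ∘ i.succAbove, fun f hf => ?_⟩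
  rw [← hmem, map_mul, ← rename_rename, finSuccEquiv_rename_succ] at hf
  refine rename_injective _ (Fin.succAbove_right_injective (p := i)) ?_
  rw [map_zero]
  refine hi _ (fun hmemvars => ?_) (hdvd _ hf)
  obtain ⟨j, -, hj⟩ := Finset.mem_image.1 (vars_rename _ _ hmemvars)
  exact Fin.succAbove_ne i j hj

lemma exists_algHom_comap_colon_eq_bot {d a : ℕ} {q₁ q₂ z : MvPolynomial (Fin (d + 2)) K}
    (hq₁ : q₁.IsHomogeneous a) {v : Fin (d + 2) → K} (hv : v ≠ 0) (hq₁v : eval v q₁ ≠ 0)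
    (hrel : IsRelPrime q₁ q₂) (hz : z ∉ Ideal.span {q₁, q₂}) :
    ∃ φ : MvPolynomial (Fin d) K →ₐ[K] MvPolynomial (Fin (d + 2)) K,
      (∀ k, (φ (X k)).IsHomogeneous 1) ∧
        ((Ideal.span {q₁, q₂}).colon {z}).comap φ = ⊥ := by
  obtain ⟨ψ, hψ, hψsymm, heval⟩ := exists_algEquiv_eval_apply_eq (w := Pi.single 0 1) hv (by simp)
  obtain ⟨ι, hι⟩ := exists_rename_forall_eq_zero
    (isHomogeneous_algHom_apply (φ := ψ.toAlgHom) hψ hq₁) ((heval q₁).trans_ne hq₁v)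
    (isRelPrime_map ψ hrel) (mt (map_mem_span_pair_iff ψ).1 hz)
  refine ⟨(ψ.symm : _ →ₐ[K] _).comp (rename ι), fun k => by simpa using hψsymm _,
    eq_bot_iff.2 fun f hf => hι f ?_⟩
  rw [Ideal.mem_comap, Submodule.mem_colon_singleton, smul_eq_mul, ← map_mem_span_pair_iff ψ] at hf
  simpa using hf

end Elimination

section Length

variable {A : Type*} [CommRing A]

lemma length_quotient_eq_length_colon_add (S : Type*) [CommRing S] [Algebra S A] (L : Ideal A)
    (q : A) : Module.length S (A ⧸ L) = Module.length S (A ⧸ L.colon {q}) +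
      Module.length S (A ⧸ (L ⊔ Ideal.span {q})) := by
  let g : A →ₗ[A] A ⧸ L := LinearMap.toSpanSingleton A (A ⧸ L) (Submodule.mkQ L q)
  have hg : LinearMap.ker g = L.colon {q} := by
    ext a
    rw [Submodule.mem_colon_singleton, ← Submodule.Quotient.mk_eq_zero L]
    rfl
  let f : (A ⧸ L.colon {q}) →ₗ[A] A ⧸ L := (L.colon {q}).liftQ g hg.ge
  let p : (A ⧸ L) →ₗ[A] A ⧸ (L ⊔ Ideal.span {q}) := Submodule.factor le_sup_left
  have hf : Function.Injective f := LinearMap.ker_eq_bot.1 (Submodule.ker_liftQ_eq_bot _ _ _ hg.le)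
  have hp : Function.Surjective p := Submodule.factor_surjective le_sup_left
  have hfp : Function.Exact f p := LinearMap.exact_iff.2 <| by
    rw [Submodule.ker_mapQ, Submodule.range_liftQ, LinearMap.range_toSpanSingleton,
      ← Set.image_singleton, ← Submodule.map_span]
    simp
  exact Module.length_eq_add_of_exact (f.restrictScalars S) (p.restrictScalars S) hf hp hfp

lemma exists_colon_singleton_eq_of_mem_associatedPrimes [IsNoetherianRing A]
    {L P : Ideal A} (hP : P ∈ associatedPrimes A (A ⧸ L)) : ∃ z, L.colon {z} = P := by
  obtain ⟨-, x, rfl⟩ := isAssociatedPrime_iff.1 hP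
  obtain ⟨z, rfl⟩ := Submodule.Quotient.mk_surjective _ x
  refine ⟨z, Ideal.ext fun a => ?_⟩
  rw [Submodule.mem_colon_singleton, Submodule.mem_colon_singleton, Submodule.mem_bot,
    ← Submodule.Quotient.mk_smul, Submodule.Quotient.mk_eq_zero]

lemma length_quotient_eq_length_of_pow_le {S : Type*} [CommRing S] [Algebra S A]
    [IsNoetherianRing A] {m : Ideal A} [hmax : m.IsMaximal]
    (hm : Function.Surjective (algebraMap S (A ⧸ m))) {n : ℕ} {L : Ideal A} (hL : m ^ n ≤ L) :
    Module.length A (A ⧸ L) = Module.length S (A ⧸ L) := by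
  induction L using IsNoetherian.induction with
  | hgt L ih =>
    rcases subsingleton_or_nontrivial (A ⧸ L) with _ | _
    · rw [Module.length_eq_zero, Module.length_eq_zero]
    obtain ⟨P, hP⟩ := associatedPrimes.nonempty A (A ⧸ L)
    obtain ⟨z, rfl⟩ := exists_colon_singleton_eq_of_mem_associatedPrimes hP
    have hprime : (L.colon {z}).IsPrime := hP.1
    have hz : z ∉ L := fun h => hprime.ne_top
      ((Submodule.colon_eq_top_iff_subset _).2 (Set.singleton_subset_iff.2 h))
    obtain rfl : m = L.colon {z} := hmax.eq_of_le hprime.ne_top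
      (hprime.le_of_pow_le (hL.trans Ideal.le_colon))
    rw [length_quotient_eq_length_colon_add A L z, length_quotient_eq_length_colon_add S L z,
      ih _ (left_lt_sup.2 fun h => hz (h (Ideal.mem_span_singleton_self z)))
        (hL.trans le_sup_left),
      Module.length_eq_of_surjective (M := A ⧸ L.colon {z}) hm,
      Module.length_eq_of_surjective (S := A) (R := A ⧸ L.colon {z}) Ideal.Quotient.mk_surjective]

end Length

section HilbertSamuel

attribute [local instance] MvPolynomial.gradedAlgebra

variable {K σ τ : Type*} [Field K]

lemma coe_decompose_eq_homogeneousComponent (f : MvPolynomial σ K) (k : ℕ) :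
    (DirectSum.decompose (homogeneousSubmodule σ K) f k : MvPolynomial σ K) =
      homogeneousComponent k f :=
  decomposition.decompose'_apply f k

lemma homogeneousComponent_add_mul {q : MvPolynomial σ K} {d : ℕ} (hq : q.IsHomogeneous d)
    (f : MvPolynomial σ K) (k : ℕ) :
    homogeneousComponent (k + d) (f * q) = homogeneousComponent k f * q := by
  simpa only [coe_decompose_eq_homogeneousComponent] using
    DirectSum.coe_decompose_mul_add_of_right_mem (homogeneousSubmodule σ K) (i := k) (a := f) hq

lemma homogeneousComponent_mul_eq_zero {q : MvPolynomial σ K} {d : ℕ} (hq : q.IsHomogeneous d)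
    (f : MvPolynomial σ K) {k : ℕ} (hk : k < d) : homogeneousComponent k (f * q) = 0 := by
  rw [← coe_decompose_eq_homogeneousComponent]
  exact DirectSum.coe_decompose_mul_of_right_mem_of_not_le (homogeneousSubmodule σ K) hq hk.not_ge

lemma homogeneousComponent_algHom_apply {φ : MvPolynomial σ K →ₐ[K] MvPolynomial τ K}
    (hφ : ∀ k, (φ (X k)).IsHomogeneous 1) (f : MvPolynomial σ K) (k : ℕ) :
    homogeneousComponent k (φ f) = φ (homogeneousComponent k f) := by
  conv_lhs => rw [← sum_homogeneousComponent f]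
  conv_rhs => rw [← sum_homogeneousComponent f]
  simp only [map_sum]
  refine Finset.sum_congr rfl fun i _ => ?_
  have hi := homogeneousComponent_isHomogeneous i f
  rw [homogeneousComponent_of_mem hi,
    homogeneousComponent_of_mem (isHomogeneous_algHom_apply hφ hi)]
  split_ifs <;> simp

lemma isHomogeneous_colon_singleton {I : Ideal (MvPolynomial σ K)}
    (hI : I.IsHomogeneous (homogeneousSubmodule σ K)) {q : MvPolynomial σ K} {d : ℕ}
    (hq : q.IsHomogeneous d) : (I.colon {q}).IsHomogeneous (homogeneousSubmodule σ K) := by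
  intro k f hf
  rw [Submodule.mem_colon_singleton] at hf ⊢
  rw [coe_decompose_eq_homogeneousComponent, smul_eq_mul, ← homogeneousComponent_add_mul hq]
  exact homogeneousComponent_mem_of_mem hI hf (k + d)

lemma isHomogeneous_span_singleton {q : MvPolynomial σ K} {d : ℕ} (hq : q.IsHomogeneous d) :
    (Ideal.span {q}).IsHomogeneous (homogeneousSubmodule σ K) :=
  Ideal.homogeneous_span _ _ (by rintro _ rfl; exact ⟨d, hq⟩)

lemma mem_sup_maxIdeal_pow_iff {L : Ideal (MvPolynomial σ K)}
    (hL : L.IsHomogeneous (homogeneousSubmodule σ K)) {n : ℕ} {f : MvPolynomial σ K} :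
    f ∈ L ⊔ maxIdeal K σ ^ n ↔ ∀ k < n, homogeneousComponent k f ∈ L := by
  have hpow : ∀ f, f ∈ maxIdeal K σ ^ n ↔ ∀ x, Finsupp.degree x < n → f.coeff x = 0 :=
    mem_pow_idealOfVars_iff' n
  constructor
  · intro hf k hk
    obtain ⟨a, ha, b, hb, rfl⟩ := Submodule.mem_sup.1 hf
    have : homogeneousComponent k b = 0 := by
      ext x
      rw [coeff_homogeneousComponent, coeff_zero, ite_eq_right_iff]
      exact fun hx => (hpow b).1 hb x (hx.trans_lt hk)
    rw [map_add, this, add_zero]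
    exact homogeneousComponent_mem_of_mem hL ha k
  · intro hf
    rw [← sum_homogeneousComponent f]
    refine Ideal.sum_mem _ fun k _ => ?_
    by_cases hk : k < n
    · exact Ideal.mem_sup_left (hf k hk)
    · refine Ideal.mem_sup_right ((hpow _).2 fun x hx => ?_)
      exact (homogeneousComponent_isHomogeneous k f).coeff_eq_zero (by omega)

lemma sup_maxIdeal_pow_colon_singleton {I : Ideal (MvPolynomial σ K)}
    (hI : I.IsHomogeneous (homogeneousSubmodule σ K)) {q : MvPolynomial σ K} {d : ℕ}
    (hq : q.IsHomogeneous d) (n : ℕ) :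
    (I ⊔ maxIdeal K σ ^ (n + d)).colon {q} = I.colon {q} ⊔ maxIdeal K σ ^ n := by
  ext f
  rw [Submodule.mem_colon_singleton, smul_eq_mul, mem_sup_maxIdeal_pow_iff hI,
    mem_sup_maxIdeal_pow_iff (isHomogeneous_colon_singleton hI hq)]
  simp only [Submodule.mem_colon_singleton, smul_eq_mul]
  constructor
  · intro h k hk
    rw [← homogeneousComponent_add_mul hq]
    exact h _ (by omega)
  · intro h k hk
    rcases lt_or_ge k d with hkd | hkd
    · rw [homogeneousComponent_mul_eq_zero hq f hkd]
      exact zero_mem I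
    · obtain ⟨j, rfl⟩ := Nat.exists_eq_add_of_le' hkd
      rw [homogeneousComponent_add_mul hq]
      exact h j (by omega)

lemma comap_sup_maxIdeal_pow {L : Ideal (MvPolynomial τ K)}
    (hL : L.IsHomogeneous (homogeneousSubmodule τ K)) {φ : MvPolynomial σ K →ₐ[K] MvPolynomial τ K}
    (hφ : ∀ k, (φ (X k)).IsHomogeneous 1) (n : ℕ) :
    (L ⊔ maxIdeal K τ ^ n).comap φ = L.comap φ ⊔ maxIdeal K σ ^ n := by
  have hL' : (L.comap φ).IsHomogeneous (homogeneousSubmodule σ K) := by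
    intro k f hf
    rw [coe_decompose_eq_homogeneousComponent, Ideal.mem_comap,
      ← homogeneousComponent_algHom_apply hφ]
    exact homogeneousComponent_mem_of_mem hL hf k
  ext f
  rw [Ideal.mem_comap, mem_sup_maxIdeal_pow_iff hL, mem_sup_maxIdeal_pow_iff hL']
  simp only [homogeneousComponent_algHom_apply hφ, Ideal.mem_comap]

end HilbertSamuel

section HilbertSamuelFunction

attribute [local instance] MvPolynomial.gradedAlgebra

variable {K σ : Type*} [Field K]

lemma card_biUnion_finsuppAntidiag_univ (σ : Type*) [Fintype σ] [DecidableEq σ] (n : ℕ) :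
    ((Finset.range (n + 1)).biUnion fun k => Finset.finsuppAntidiag (Finset.univ : Finset σ) k).card
      = (n + Fintype.card σ).choose (Fintype.card σ) := by
  rw [Finset.card_biUnion]
  · simp only [Finset.card_finsuppAntidiag_nat_eq_multichoose, Finset.card_univ]
    exact Nat.sum_range_multichoose n _
  · intro i _ j _ hij
    refine Finset.disjoint_left.2 fun x hi hj => hij ?_
    rw [Finset.mem_finsuppAntidiag] at hi hj
    exact hi.1.symm.trans hj.1

lemma nonempty_linearEquiv_quotient_maxIdeal_pow [Fintype σ] [DecidableEq σ] (n : ℕ) :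
    Nonempty ((MvPolynomial σ K ⧸ maxIdeal K σ ^ n) ≃ₗ[K]
      ((Finset.range n).biUnion fun k => Finset.finsuppAntidiag (Finset.univ : Finset σ) k) →
        K) := by
  set s := (Finset.range n).biUnion fun k => Finset.finsuppAntidiag (Finset.univ : Finset σ) k
  have hs : ∀ x, x ∈ s ↔ Finsupp.degree x < n := fun x => by
    simp [s, Finset.mem_finsuppAntidiag, Finsupp.degree_eq_sum]
  let c : MvPolynomial σ K →ₗ[K] s → K := LinearMap.pi fun x => lcoeff K x.1
  have hc : Function.Surjective c := fun v => by
    refine ⟨∑ x : s, monomial x.1 (v x), funext fun y => ?_⟩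
    simp [c, coeff_monomial]
  have hker : LinearMap.ker c = (maxIdeal K σ ^ n).restrictScalars K := by
    ext f
    refine Iff.trans ?_ (mem_pow_idealOfVars_iff' n f).symm
    simp [c, funext_iff, hs]
  exact ⟨(Submodule.Quotient.restrictScalarsEquiv K (maxIdeal K σ ^ n)).symm.trans
    ((Submodule.quotEquivOfEq _ _ hker.symm).trans (c.quotKerEquivOfSurjective hc))⟩

lemma finrank_quotient_maxIdeal_pow_succ [Fintype σ] (n : ℕ) :
    Module.finrank K (MvPolynomial σ K ⧸ maxIdeal K σ ^ (n + 1)) =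
      (n + Fintype.card σ).choose (Fintype.card σ) := by
  classical
  obtain ⟨e⟩ := nonempty_linearEquiv_quotient_maxIdeal_pow (K := K) (σ := σ) (n + 1)
  rw [e.finrank_eq, Module.finrank_fintype_fun_eq_card, Fintype.card_coe,
    card_biUnion_finsuppAntidiag_univ]

lemma finite_quotient_of_maxIdeal_pow_le [Finite σ] {L : Ideal (MvPolynomial σ K)} {n : ℕ}
    (hL : maxIdeal K σ ^ n ≤ L) : Module.Finite K (MvPolynomial σ K ⧸ L) := by
  classical
  have := Fintype.ofFinite σ
  obtain ⟨e⟩ := nonempty_linearEquiv_quotient_maxIdeal_pow (K := K) (σ := σ) n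
  have := Module.Finite.equiv e.symm
  exact Module.Finite.of_surjective ((Submodule.factor hL).restrictScalars K)
    (Submodule.factor_surjective hL)

lemma maxIdeal_eq_ker_constantCoeff :
    maxIdeal K σ = RingHom.ker (constantCoeff : MvPolynomial σ K →+* K) := by
  ext f
  rw [← pow_one (maxIdeal K σ), RingHom.mem_ker, constantCoeff_eq]
  refine (mem_pow_idealOfVars_iff' 1 f).trans ⟨fun h => h 0 (by simp), fun h x hx => ?_⟩
  rwa [(Finsupp.degree_eq_zero_iff x).1 (Nat.lt_one_iff.1 hx)]

instance isMaximal_maxIdeal : (maxIdeal K σ).IsMaximal := by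
  rw [maxIdeal_eq_ker_constantCoeff]
  exact RingHom.ker_isMaximal_of_surjective _ fun c => ⟨C c, constantCoeff_C σ c⟩

lemma surjective_algebraMap_quotient_maxIdeal :
    Function.Surjective (algebraMap K (MvPolynomial σ K ⧸ maxIdeal K σ)) := by
  intro x
  obtain ⟨f, rfl⟩ := Ideal.Quotient.mk_surjective x
  refine ⟨constantCoeff f, Ideal.Quotient.eq.2 ?_⟩
  rw [maxIdeal_eq_ker_constantCoeff, RingHom.mem_ker]
  simp [algebraMap_eq]

/-- The Hilbert–Samuel function `n ↦ dim_K R/(I + 𝔪ⁿ)` of `R/I`, where `𝔪` is the homogeneous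
maximal ideal of the polynomial ring `R`. -/
noncomputable def hilbertSamuelFunction (I : Ideal (MvPolynomial σ K)) (n : ℕ) : ℕ :=
  Module.finrank K (MvPolynomial σ K ⧸ (I ⊔ maxIdeal K σ ^ n))

lemma moduleLength_eq_hilbertSamuelFunction [Finite σ] (I : Ideal (MvPolynomial σ K)) (n : ℕ) :
    moduleLength (MvPolynomial σ K) (MvPolynomial σ K ⧸ (I ⊔ maxIdeal K σ ^ n)) =
      ((hilbertSamuelFunction I n : ℕ∞) : WithBot ℕ∞) := by
  have := finite_quotient_of_maxIdeal_pow_le (le_sup_right : _ ≤ I ⊔ maxIdeal K σ ^ n)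
  rw [moduleLength, ← Module.coe_length, length_quotient_eq_length_of_pow_le
    surjective_algebraMap_quotient_maxIdeal le_sup_right, Module.length_eq_finrank]
  rfl

lemma hilbertSamuelFunction_add [Finite σ] {I : Ideal (MvPolynomial σ K)}
    (hI : I.IsHomogeneous (homogeneousSubmodule σ K)) {q : MvPolynomial σ K} {d : ℕ}
    (hq : q.IsHomogeneous d) (n : ℕ) :
    hilbertSamuelFunction I (n + d) = hilbertSamuelFunction (I.colon {q}) n +
      hilbertSamuelFunction (I ⊔ Ideal.span {q}) (n + d) := by
  have h := length_quotient_eq_length_colon_add K (I ⊔ maxIdeal K σ ^ (n + d)) q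
  rw [sup_maxIdeal_pow_colon_singleton hI hq, sup_right_comm] at h
  have hfin : ∀ (L : Ideal (MvPolynomial σ K)) k,
      Module.Finite K (MvPolynomial σ K ⧸ (L ⊔ maxIdeal K σ ^ k)) :=
    fun L k => finite_quotient_of_maxIdeal_pow_le le_sup_right
  simp only [Module.length_eq_finrank] at h
  exact_mod_cast h

lemma hilbertSamuelFunction_anti [Finite σ] {I J : Ideal (MvPolynomial σ K)} (hIJ : I ≤ J) (n : ℕ) :
    hilbertSamuelFunction J n ≤ hilbertSamuelFunction I n := by
  have := finite_quotient_of_maxIdeal_pow_le (le_sup_right : _ ≤ I ⊔ maxIdeal K σ ^ n)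
  have hle : I ⊔ maxIdeal K σ ^ n ≤ J ⊔ maxIdeal K σ ^ n := sup_le_sup_right hIJ _
  exact LinearMap.finrank_le_finrank_of_surjective (f := (Submodule.factor hle).restrictScalars K)
    (Submodule.factor_surjective hle)

lemma hilbertSamuelFunction_bot_succ [Fintype σ] (n : ℕ) :
    hilbertSamuelFunction (⊥ : Ideal (MvPolynomial σ K)) (n + 1) =
      (n + Fintype.card σ).choose (Fintype.card σ) := by
  rw [hilbertSamuelFunction, bot_sup_eq, finrank_quotient_maxIdeal_pow_succ]

lemma hilbertSamuelFunction_comap_le {τ : Type*} [Finite τ] {L : Ideal (MvPolynomial τ K)}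
    (hL : L.IsHomogeneous (homogeneousSubmodule τ K)) {φ : MvPolynomial σ K →ₐ[K] MvPolynomial τ K}
    (hφ : ∀ k, (φ (X k)).IsHomogeneous 1) (n : ℕ) :
    hilbertSamuelFunction (L.comap φ) n ≤ hilbertSamuelFunction L n := by
  have := finite_quotient_of_maxIdeal_pow_le (le_sup_right : _ ≤ L ⊔ maxIdeal K τ ^ n)
  have hcomap := comap_sup_maxIdeal_pow hL hφ n
  exact LinearMap.finrank_le_finrank_of_injective
    (f := (Ideal.quotientMapₐ (L ⊔ maxIdeal K τ ^ n) φ hcomap.ge).toLinearMap)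
    (Ideal.quotientMap_injective' (H := hcomap.ge) hcomap.le)

end HilbertSamuelFunction

section HilbertSamuelPolynomial

attribute [local instance] MvPolynomial.gradedAlgebra

lemma exists_polynomial_eval_add_one_eq (Q : Polynomial ℚ) :
    ∃ S : Polynomial ℚ, ∀ x, S.eval (x + 1) = S.eval x + Q.eval x := by
  induction Q using Polynomial.induction_on' with
  | add p q hp hq =>
    obtain ⟨S, hS⟩ := hp
    obtain ⟨T, hT⟩ := hq
    exact ⟨S + T, fun x => by simp only [Polynomial.eval_add, hS, hT]; ring⟩
  | monomial k c =>
    refine ⟨Polynomial.C (c / (k + 1)) * Polynomial.bernoulli (k + 1), fun x => ?_⟩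
    have hk : (k : ℚ) + 1 ≠ 0 := by positivity
    simp only [Polynomial.eval_mul, Polynomial.eval_C, Polynomial.eval_monomial, add_comm x 1,
      Polynomial.bernoulli_eval_one_add, Nat.cast_add, Nat.cast_one, Nat.add_sub_cancel]
    field_simp

lemma exists_polynomial_eventually_eq_of_succ {f : ℕ → ℚ} {Q : Polynomial ℚ}
    (hf : ∀ᶠ n : ℕ in atTop, f (n + 1) = f n + Q.eval (n : ℚ)) :
    ∃ P : Polynomial ℚ, ∀ᶠ n : ℕ in atTop, f n = P.eval (n : ℚ) := by
  obtain ⟨S, hS⟩ := exists_polynomial_eval_add_one_eq Q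
  obtain ⟨n₀, hn₀⟩ := eventually_atTop.1 hf
  refine ⟨S + Polynomial.C (f n₀ - S.eval (n₀ : ℚ)), eventually_atTop.2 ⟨n₀, fun n hn => ?_⟩⟩
  induction n, hn using Nat.le_induction with
  | base => simp
  | succ n hn ih =>
    rw [hn₀ n hn, ih]
    simp only [Polynomial.eval_add, Polynomial.eval_C, Nat.cast_add, Nat.cast_one, hS]
    ring

variable {K σ : Type*} [Field K]

theorem exists_polynomial_eventually_eq_hilbertSamuelFunction [Finite σ]
    {I : Ideal (MvPolynomial σ K)} (hI : I.IsHomogeneous (homogeneousSubmodule σ K)) :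
    ∃ P : Polynomial ℚ, ∀ᶠ n : ℕ in atTop, (hilbertSamuelFunction I n : ℚ) = P.eval (n : ℚ) := by
  induction I using IsNoetherian.induction with
  | hgt I ih =>
    by_cases hX : ∀ i, X i ∈ I
    · have hm : maxIdeal K σ ≤ I := Ideal.span_le.2 (Set.range_subset_iff.2 hX)
      refine ⟨Polynomial.C (Module.finrank K (MvPolynomial σ K ⧸ I) : ℚ), ?_⟩
      filter_upwards [eventually_ne_atTop 0] with n hn
      rw [hilbertSamuelFunction, sup_eq_left.2 ((Ideal.pow_le_self hn).trans hm),
        Polynomial.eval_C]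
    · obtain ⟨i, hi⟩ := not_forall.1 hX
      have hXi : (X i : MvPolynomial σ K).IsHomogeneous 1 := isHomogeneous_X _ _
      obtain ⟨Q, hQ⟩ := ih (I ⊔ Ideal.span {X i})
        (left_lt_sup.2 fun h => hi (h (Ideal.mem_span_singleton_self _)))
        (hI.sup (isHomogeneous_span_singleton hXi))
      have hstep : ∀ᶠ n : ℕ in atTop, (hilbertSamuelFunction I (n + 1) : ℚ) =
          hilbertSamuelFunction (I.colon {X i}) n + (Q.comp (Polynomial.X + 1)).eval (n : ℚ) := by
        filter_upwards [(tendsto_add_atTop_nat 1).eventually hQ] with n hn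
        rw [hilbertSamuelFunction_add hI hXi, Nat.cast_add, hn]
        simp
      by_cases hc : I.colon {X i} = I
      · rw [hc] at hstep
        exact exists_polynomial_eventually_eq_of_succ hstep
      · obtain ⟨P, hP⟩ := ih (I.colon {X i}) (lt_of_le_of_ne' Ideal.le_colon hc)
          (isHomogeneous_colon_singleton hI hXi)
        refine ⟨P.comp (Polynomial.X - 1) + Q, ?_⟩
        rw [← map_add_atTop_eq_nat 1, eventually_map]
        filter_upwards [hP, hstep] with n hn hs
        rw [hs, hn]
        simp

end HilbertSamuelPolynomial

section Height

lemma idealHeight_eq_height {A : Type*} [CommRing A] (I : Ideal A) : idealHeight I = I.height := by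
  refine le_antisymm ?_ (le_iInf₂ fun p hp => ?_)
  · rw [Ideal.height_eq_inf_minimalPrimes]
    refine le_iInf₂ fun p hp => ?_
    have := hp.1.1
    rw [PrimeSpectrum.height_eq_orderHeight ⟨p, this⟩]
    exact iInf₂_le (⟨p, this⟩ : PrimeSpectrum A) hp.1.2
  · rw [← PrimeSpectrum.height_eq_orderHeight]
    exact Ideal.height_mono hp

lemma height_add_ringKrullDim_quotient_le {A : Type*} [CommRing A] (I : Ideal A) :
    (I.height : WithBot ℕ∞) + ringKrullDim (A ⧸ I) ≤ ringKrullDim A := by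
  rw [ringKrullDim_quotient]
  rcases isEmpty_or_nonempty (PrimeSpectrum.zeroLocus (I : Set A)) with _ | h
  · rw [Order.krullDim_eq_bot, WithBot.add_bot]
    exact bot_le
  have : Nonempty (PrimeSpectrum A) := h.map Subtype.val
  rw [Order.krullDim_eq_iSup_length, ringKrullDim,
    Order.krullDim_eq_iSup_height_add_coheight_of_nonempty, ← WithBot.coe_add, ENat.add_iSup,
    WithBot.coe_le_coe]
  refine iSup_le fun l => le_iSup_of_le l.head.1 (add_le_add ?_ ?_)
  · rw [← PrimeSpectrum.height_eq_orderHeight]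
    exact Ideal.height_mono l.head.2
  · exact Order.length_le_coheight_head (p := l.map Subtype.val fun _ _ => id)

lemma two_le_height_span_pair {A : Type*} [CommRing A] [IsDomain A] [UniqueFactorizationMonoid A]
    {a b : A} (ha : a ≠ 0) (hab : IsRelPrime a b) : 2 ≤ (Ideal.span {a, b}).height := by
  rw [Ideal.height_eq_inf_minimalPrimes]
  refine le_iInf₂ fun P hP => ?_
  have hPprime : P.IsPrime := hP.1.1
  obtain ⟨haP, hbP⟩ : a ∈ P ∧ b ∈ P := by
    simpa [Ideal.span_le, Set.pair_subset_iff] using hP.1.2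
  obtain ⟨π, hπP, hπ, hπa⟩ : ∃ π ∈ P, Prime π ∧ π ∣ a := by
    obtain ⟨s, hs, hsa⟩ := UniqueFactorizationMonoid.exists_prime_factors a ha
    obtain ⟨π, hπ, hπP⟩ := (Ideal.IsPrime.multiset_prod_mem_iff_exists_mem hPprime s).1
      (P.mem_of_dvd hsa.symm.dvd haP)
    exact ⟨π, hπP, hs π hπ, (Multiset.dvd_prod hπ).trans hsa.dvd⟩
  have hπprime : (Ideal.span {π}).IsPrime := (Ideal.span_singleton_prime hπ.ne_zero).2 hπ
  have hbot : (⊥ : Ideal A) < Ideal.span {π} :=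
    bot_lt_iff_ne_bot.2 (mt Ideal.span_singleton_eq_bot.1 hπ.ne_zero)
  have hlt : Ideal.span {π} < P := by
    refine lt_of_le_of_ne ((Ideal.span_singleton_le_iff_mem _).2 hπP) ?_
    rintro rfl
    exact hπ.not_isUnit (hab hπa (Ideal.mem_span_singleton.1 hbP))
  calc (2 : ℕ∞) = (⊥ : Ideal A).height + 1 + 1 := by rw [Ideal.height_bot]; norm_num
    _ ≤ (Ideal.span {π}).height + 1 := by
      gcongr
      exact Ideal.height_add_one_le_of_lt_of_isPrime hbot
    _ ≤ P.height := Ideal.height_add_one_le_of_lt_of_isPrime hlt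

lemma exists_colon_singleton_eq_of_height_le {A : Type*} [CommRing A] [IsNoetherianRing A]
    {J P : Ideal A} [P.IsPrime] (hJP : J ≤ P) (hht : P.height ≤ J.height) :
    ∃ z, J.colon {z} = P := by
  refine exists_colon_singleton_eq_of_mem_associatedPrimes <|
    Module.associatedPrimes.minimalPrimes_annihilator_subset_associatedPrimes A _ ?_
  rw [Ideal.annihilator_quotient]
  exact Ideal.mem_minimalPrimes_of_height_le hJP hht

lemma ringKrullDim_le_of_isIntegral {A B : Type*} [CommRing A] [CommRing B] [Algebra A B]
    [Algebra.IsIntegral A B] [FaithfulSMul A B] : ringKrullDim A ≤ ringKrullDim B := by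
  refine iSup_le fun l => ?_
  obtain ⟨Q, -, _, hQ⟩ := Ideal.exists_ideal_over_prime_of_isIntegral l.head.asIdeal (⊥ : Ideal B)
    ((Ideal.comap_bot_of_injective _ (FaithfulSMul.algebraMap_injective A B)).trans_le bot_le)
  have : Q.LiesOver l.head.asIdeal := ⟨hQ.symm⟩
  obtain ⟨L, hL, -⟩ := Ideal.exists_ltSeries_of_hasGoingUp l Q
  exact hL ▸ Order.LTSeries.length_le_krullDim L

lemma le_ringKrullDim_of_injective_algHom {K B : Type u} [Field K] [CommRing B] [IsDomain B]
    [Algebra K B] [Algebra.FiniteType K B] {d : ℕ} {φ : MvPolynomial (Fin d) K →ₐ[K] B}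
    (hφ : Function.Injective φ) : (d : WithBot ℕ∞) ≤ ringKrullDim B := by
  obtain ⟨s, g, hg, hfin⟩ := exists_finite_inj_algHom_of_fg K B
  algebraize [g.toRingHom]
  have : IsScalarTower K (MvPolynomial (Fin s) K) B :=
    IsScalarTower.of_algebraMap_eq fun x => (g.commutes x).symm
  have : FaithfulSMul (MvPolynomial (Fin s) K) B :=
    (faithfulSMul_iff_algebraMap_injective _ _).2 hg
  have : Module.Finite (MvPolynomial (Fin s) K) B := hfin
  have hds : d ≤ s := by
    have h := trdeg_le_of_injective φ hφ
    rw [← trdeg_add_eq K (MvPolynomial (Fin s) K) (A := B),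
      trdeg_eq_zero (R := MvPolynomial (Fin s) K) (A := B), MvPolynomial.trdeg_of_isDomain,
      MvPolynomial.trdeg_of_isDomain] at h
    simpa using h
  calc (d : WithBot ℕ∞) ≤ s := mod_cast hds
    _ = ringKrullDim (MvPolynomial (Fin s) K) := by
      rw [MvPolynomial.ringKrullDim_of_isNoetherianRing]
      simp
    _ ≤ ringKrullDim B := ringKrullDim_le_of_isIntegral

end Height

section RelPrime

lemma exists_forall_notMem_of_card_le {ι K V : Type*} [DivisionRing K] [AddCommGroup V]
    [Module K V] {s : Finset ι} {p : ι → Submodule K V} (hp : ∀ i ∈ s, p i ≠ ⊤)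
    (hs : (s.card : Cardinal) ≤ Cardinal.mk K) : ∃ v, ∀ i ∈ s, v ∉ p i := by
  classical
  induction s using Finset.induction_on with
  | empty => exact ⟨0, by simp⟩
  | insert i s hi ih =>
    have hs' : (s.card : Cardinal) < Cardinal.mk K := by
      rw [Finset.card_insert_of_notMem hi] at hs
      exact lt_of_lt_of_le (by exact_mod_cast Nat.lt_succ_self _) hs
    rw [Finset.forall_mem_insert] at hp
    obtain ⟨v, hv⟩ := ih hp.2 hs'.le
    by_cases hvi : v ∈ p i
    · obtain ⟨u, -, hu⟩ := SetLike.exists_of_lt (lt_top_iff_ne_top.2 hp.1)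
      -- Off `p i`, the line `u + K v` meets each `p j` with `j ∈ s` at most once.
      obtain ⟨c, hc⟩ : ∃ c : K, ∀ j ∈ s, u + c • v ∉ p j := by
        by_contra! h
        choose j hjs hj using h
        have hinj : Function.Injective fun c => (⟨j c, hjs c⟩ : s) := fun a b hab => by
          by_contra hne
          have hsub := (p (j a)).sub_mem (hj a) ((Subtype.mk.inj hab).symm ▸ hj b)
          rw [add_sub_add_left_eq_sub, ← sub_smul,
            (p (j a)).smul_mem_iff (sub_ne_zero.2 hne)] at hsub
          exact hv _ (hjs a) hsub
        have hle := Cardinal.lift_mk_le_lift_mk_of_injective hinj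
        rw [Cardinal.mk_coe_finset, Cardinal.lift_natCast, Cardinal.lift_le_nat_iff] at hle
        exact hs'.not_ge hle
      refine ⟨u + c • v, Finset.forall_mem_insert _ _ _ |>.2 ⟨fun h => hu ?_, hc⟩⟩
      exact ((p i).add_mem_iff_left ((p i).smul_mem c hvi)).1 h
    · exact ⟨v, Finset.forall_mem_insert _ _ _ |>.2 ⟨hvi, hv⟩⟩

variable {K σ : Type*} [Field K]

lemma card_le_totalDegree_prod {s : Multiset (MvPolynomial σ K)} (hs : ∀ p ∈ s, Prime p) :
    s.card ≤ s.prod.totalDegree := by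
  induction s using Multiset.induction_on with
  | empty => simp
  | cons p s ih =>
    rw [Multiset.forall_mem_cons] at hs
    have hp : p.totalDegree ≠ 0 := fun h =>
      hs.1.not_isUnit <| isUnit_iff_totalDegree_of_isReduced.2 ⟨isUnit_iff_ne_zero.2 fun h0 =>
        hs.1.ne_zero (by rw [totalDegree_eq_zero_iff_eq_C.1 h, h0, C_0]), h⟩
    have hs0 : s.prod ≠ 0 := Multiset.prod_ne_zero fun h => (hs.2 0 h).ne_zero rfl
    rw [Multiset.card_cons, Multiset.prod_cons, totalDegree_mul_of_isDomain hs.1.ne_zero hs0]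
    have := ih hs.2
    lia

lemma exists_mem_isRelPrime {V : Submodule K (MvPolynomial σ K)} {f : MvPolynomial σ K}
    (hf : f ≠ 0) (hV : ∀ π, Prime π → ∃ g ∈ V, ¬π ∣ g)
    (hK : (f.totalDegree : Cardinal) ≤ Cardinal.mk K) : ∃ g ∈ V, IsRelPrime f g := by
  classical
  obtain ⟨s, hs, hsf⟩ := UniqueFactorizationMonoid.exists_prime_factors f hf
  have hcard : s.toFinset.card ≤ f.totalDegree :=
    s.toFinset_card_le.trans <| (card_le_totalDegree_prod hs).trans <|
      totalDegree_le_of_dvd_of_isDomain hsf.dvd hf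
  obtain ⟨⟨g, hgV⟩, hg⟩ := exists_forall_notMem_of_card_le (s := s.toFinset)
    (p := fun π => ((Ideal.span {π}).restrictScalars K).submoduleOf V)
    (fun π hπ h => by
      obtain ⟨g, hgV, hg⟩ := hV π (hs π (Multiset.mem_toFinset.1 hπ))
      have : (⟨g, hgV⟩ : V) ∈ ((Ideal.span {π}).restrictScalars K).submoduleOf V := h ▸ trivial
      exact hg (Ideal.mem_span_singleton.1 this))
    ((Nat.cast_le.2 hcard).trans hK)
  refine ⟨g, hgV, (UniqueFactorizationMonoid.isRelPrime_iff_no_prime_factors hf).2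
    fun π hπf hπg hπ => ?_⟩
  obtain ⟨ρ, hρs, hπρ⟩ := hπ.exists_mem_multiset_dvd (hπf.trans hsf.symm.dvd)
  exact hg ρ (Multiset.mem_toFinset.2 hρs) <| Ideal.mem_span_singleton.2 <|
    (hπ.associated_of_dvd (hs ρ hρs) hπρ).symm.dvd.trans hπg

lemma exists_mem_not_dvd_of_two_le_height {A : Type*} [CommRing A] [IsNoetherianRing A]
    {S : Set A} (hS : 2 ≤ (Ideal.span S).height) {π : A} (hπ : ¬IsUnit π) : ∃ g ∈ S, ¬π ∣ g := by
  by_contra! h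
  have hle : Ideal.span S ≤ Ideal.span {π} :=
    Ideal.span_le.2 fun g hg => Ideal.mem_span_singleton.2 (h g hg)
  exact absurd ((hS.trans (Ideal.height_mono hle)).trans (Ideal.height_span_singleton_le_one hπ))
    (by norm_num)

lemma exists_isRelPrime_of_two_le_height [Finite σ] {D : ℕ} {ι : Type*} {g : ι → MvPolynomial σ K}
    (hg : ∀ i, (g i).IsHomogeneous D) (hht : 2 ≤ (Ideal.span (Set.range g)).height)
    (hK : (D : Cardinal) ≤ Cardinal.mk K) :
    ∃ q₁ q₂ : MvPolynomial σ K, q₁.IsHomogeneous D ∧ q₂.IsHomogeneous D ∧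
      Ideal.span {q₁, q₂} ≤ Ideal.span (Set.range g) ∧ q₁ ≠ 0 ∧ IsRelPrime q₁ q₂ := by
  obtain ⟨_, ⟨i, rfl⟩, hi⟩ :=
    exists_mem_not_dvd_of_two_le_height hht (not_isUnit_zero (M₀ := MvPolynomial σ K))
  rw [zero_dvd_iff] at hi
  obtain ⟨q, hq, hrel⟩ := exists_mem_isRelPrime (V := Submodule.span K (Set.range g)) hi
    (fun π hπ => (exists_mem_not_dvd_of_two_le_height hht hπ.not_isUnit).imp
      fun _ h => ⟨Submodule.subset_span h.1, h.2⟩)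
    (le_trans (mod_cast (hg i).totalDegree_le) hK)
  have hhom : Submodule.span K (Set.range g) ≤ homogeneousSubmodule σ K D :=
    Submodule.span_le.2 (Set.range_subset_iff.2 hg)
  refine ⟨g i, q, hg i, hhom hq, ?_, hi, hrel⟩
  rw [Ideal.span_le, Set.pair_subset_iff]
  exact ⟨Ideal.subset_span ⟨i, rfl⟩, Submodule.span_le_restrictScalars K _ _ hq⟩

end RelPrime

section Asymptotics

lemma natDegree_sub_taylor_le_and_coeff_eq {R : Type*} [CommRing R] {p : Polynomial R} {k : ℕ}
    (hp : p.natDegree ≤ k + 1) (a : R) : (p - p.taylor (-a)).natDegree ≤ k ∧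
      (p - p.taylor (-a)).coeff k = a * (k + 1) * p.coeff (k + 1) := by
  have hcoeff (j : ℕ) (hj : j ≤ k + 1) : (p.taylor (-a)).coeff j =
      ∑ i ∈ Finset.range (k + 2 - j), (i + j).choose j * p.coeff (i + j) * (-a) ^ i := by
    rw [Polynomial.taylor_coeff, Polynomial.eval_eq_sum_range' (n := k + 2 - j) ?_]
    · simp only [Polynomial.hasseDeriv_coeff]
    · have := Polynomial.natDegree_hasseDeriv_le p j
      lia
  constructor
  · refine Polynomial.natDegree_le_iff_coeff_eq_zero.2 fun j hj => ?_
    rcases (Nat.succ_le_of_lt hj).eq_or_lt with rfl | hlt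
    · simp [hcoeff]
    · rw [Polynomial.coeff_eq_zero_of_natDegree_lt]
      refine (Polynomial.natDegree_sub_le_of_le hp ((Polynomial.natDegree_taylor p _).trans_le
        hp)).trans_lt ?_
      simpa using hlt
  · rw [Polynomial.coeff_sub, hcoeff k k.le_succ, Nat.add_sub_cancel_left, Finset.sum_range_succ,
      Finset.sum_range_one, zero_add, add_comm 1 k, Nat.choose_self, Nat.choose_succ_self_right]
    push_cast
    ring

variable {P Q T : Polynomial ℚ} {d : ℕ}

lemma coeff_nonneg_of_eventually_eval_nonneg (h : ∀ᶠ n : ℕ in atTop, 0 ≤ P.eval (n : ℚ))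
    (hd : P.natDegree ≤ d) : 0 ≤ P.coeff d := by
  rcases hd.lt_or_eq with hlt | rfl
  · rw [Polynomial.coeff_eq_zero_of_natDegree_lt hlt]
  by_contra! hc
  by_cases hdeg : 0 < P.degree
  · have hbot := (P.tendsto_atBot_of_leadingCoeff_nonpos hdeg hc.le).comp
      (tendsto_natCast_atTop_atTop (R := ℚ))
    obtain ⟨n, hn, hn'⟩ := (h.and (hbot.eventually (eventually_lt_atBot 0))).exists
    exact hn'.not_ge hn
  · rw [Polynomial.eq_C_of_degree_le_zero (not_lt.1 hdeg)] at h hc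
    obtain ⟨n, hn⟩ := h.exists
    simp only [Polynomial.eval_C, Polynomial.natDegree_C, Polynomial.coeff_C_zero] at hn hc
    exact hc.not_ge hn

lemma coeff_le_coeff_of_eventually_eval_le
    (h : ∀ᶠ n : ℕ in atTop, P.eval (n : ℚ) ≤ Q.eval (n : ℚ))
    (hP : P.natDegree ≤ d) (hQ : Q.natDegree ≤ d) : P.coeff d ≤ Q.coeff d := by
  rw [← sub_nonneg, ← Polynomial.coeff_sub]
  refine coeff_nonneg_of_eventually_eval_nonneg ?_
    ((Polynomial.natDegree_sub_le_of_le hQ hP).trans_eq (max_self d))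
  filter_upwards [h] with n hn
  rwa [Polynomial.eval_sub, sub_nonneg]

lemma natDegree_le_of_eventually_eval_le
    (hQP : ∀ᶠ n : ℕ in atTop, Q.eval (n : ℚ) ≤ P.eval (n : ℚ))
    (hPT : ∀ᶠ n : ℕ in atTop, P.eval (n : ℚ) ≤ T.eval (n : ℚ))
    (hQ : Q.natDegree ≤ d) (hT : T.natDegree ≤ d) : P.natDegree ≤ d := by
  by_contra! hc
  have hlow := coeff_le_coeff_of_eventually_eval_le hQP (hQ.trans hc.le) le_rfl
  have hup := coeff_le_coeff_of_eventually_eval_le hPT le_rfl (hT.trans hc.le)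
  rw [Polynomial.coeff_eq_zero_of_natDegree_lt (hQ.trans_lt hc)] at hlow
  rw [Polynomial.coeff_eq_zero_of_natDegree_lt (hT.trans_lt hc)] at hup
  have hP : P.leadingCoeff = 0 := le_antisymm hup hlow
  rw [Polynomial.leadingCoeff_eq_zero] at hP
  simp [hP] at hc

lemma exists_intCast_eq_leadingCoeff_mul_factorial {F : ℕ → ℤ}
    (h : ∀ᶠ n : ℕ in atTop, (F n : ℚ) = P.eval (n : ℚ)) :
    ∃ e : ℤ, (e : ℚ) = P.leadingCoeff * P.natDegree.factorial := by
  obtain ⟨n₀, hn₀⟩ := eventually_atTop.1 h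
  -- The `natDegree`-th finite difference of `P` is the constant `leadingCoeff * natDegree!`.
  have hdiff := congrFun P.fwdDiff_iter_degree_eq_factorial (n₀ : ℚ)
  rw [fwdDiff_iter_eq_sum_shift] at hdiff
  refine ⟨∑ k ∈ Finset.range (P.natDegree + 1),
    ((-1 : ℤ) ^ (P.natDegree - k) * P.natDegree.choose k) * F (n₀ + k), ?_⟩
  refine Eq.trans ?_ (hdiff.trans (by simp))
  push_cast
  refine Finset.sum_congr rfl fun k _ => ?_
  rw [hn₀ (n₀ + k) (Nat.le_add_right _ _)]
  simp

lemma exists_natCast_eq_leadingCoeff_mul_factorial {F : ℕ → ℕ}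
    (h : ∀ᶠ n : ℕ in atTop, (F n : ℚ) = P.eval (n : ℚ)) :
    ∃ e : ℕ, (e : ℚ) = P.leadingCoeff * P.natDegree.factorial := by
  obtain ⟨e, he⟩ :=
    exists_intCast_eq_leadingCoeff_mul_factorial (F := fun n => F n) (by simpa using h)
  have hlc : 0 ≤ P.leadingCoeff := coeff_nonneg_of_eventually_eval_nonneg
    (h.mono fun n hn => hn ▸ Nat.cast_nonneg _) le_rfl
  have he0 : 0 ≤ e := by
    have : (0 : ℚ) ≤ e := he ▸ by positivity
    exact_mod_cast this
  lift e to ℕ using he0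
  exact ⟨e, by exact_mod_cast he⟩

lemma natDegree_eq_and_exists_natCast_eq_leadingCoeff_mul_factorial {F : ℕ → ℕ}
    (hP : ∀ᶠ n : ℕ in atTop, (F n : ℚ) = P.eval (n : ℚ))
    (hQP : ∀ᶠ n : ℕ in atTop, Q.eval (n : ℚ) ≤ F n)
    (hPT : ∀ᶠ n : ℕ in atTop, F n ≤ T.eval (n : ℚ))
    (hQ : Q.natDegree ≤ d) (hT : T.natDegree ≤ d) (hpos : 0 < Q.coeff d) :
    P.natDegree = d ∧
      ∃ e : ℕ, (e : ℚ) = P.leadingCoeff * d.factorial ∧ (e : ℚ) ≤ T.coeff d * d.factorial := by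
  replace hQP : ∀ᶠ n : ℕ in atTop, Q.eval (n : ℚ) ≤ P.eval (n : ℚ) := by
    filter_upwards [hP, hQP] with n h₁ h₂ using h₁ ▸ h₂
  replace hPT : ∀ᶠ n : ℕ in atTop, P.eval (n : ℚ) ≤ T.eval (n : ℚ) := by
    filter_upwards [hP, hPT] with n h₁ h₂ using h₁ ▸ h₂
  have hle := natDegree_le_of_eventually_eval_le hQP hPT hQ hT
  have hlow := coeff_le_coeff_of_eventually_eval_le hQP hQ hle
  obtain rfl : P.natDegree = d :=
    hle.antisymm (Polynomial.le_natDegree_of_ne_zero (hpos.trans_le hlow).ne')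
  obtain ⟨e, he⟩ := exists_natCast_eq_leadingCoeff_mul_factorial hP
  refine ⟨rfl, e, he, he ▸ ?_⟩
  gcongr
  exact coeff_le_coeff_of_eventually_eval_le hPT le_rfl hT

end Asymptotics

section Multiplicity

attribute [local instance] MvPolynomial.gradedAlgebra

variable {K : Type*} [Field K]

lemma eventually_hilbertSamuelFunction_bot_eq {σ : Type*} [Fintype σ] :
    ∀ᶠ n : ℕ in atTop, (hilbertSamuelFunction (⊥ : Ideal (MvPolynomial σ K)) n : ℚ) =
      (Polynomial.preHilbertPoly ℚ (Fintype.card σ) 1).eval (n : ℚ) := by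
  filter_upwards [eventually_ge_atTop 1] with n hn
  rw [Polynomial.preHilbertPoly_eq_choose_sub_add ℚ _ hn]
  obtain ⟨m, rfl⟩ := Nat.exists_eq_add_of_le' hn
  rw [hilbertSamuelFunction_bot_succ, Nat.add_sub_cancel]

lemma exists_polynomial_eventually_eq_of_colon_eq {σ : Type*} [Finite σ]
    {I : Ideal (MvPolynomial σ K)} (hI : I.IsHomogeneous (homogeneousSubmodule σ K))
    {q : MvPolynomial σ K} {b : ℕ} (hq : q.IsHomogeneous b) (hcolon : I.colon {q} = I)
    {P : Polynomial ℚ} {k : ℕ} (hP : P.natDegree ≤ k + 1)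
    (hIP : ∀ᶠ n : ℕ in atTop, (hilbertSamuelFunction I n : ℚ) = P.eval (n : ℚ)) :
    ∃ Q : Polynomial ℚ, Q.natDegree ≤ k ∧ Q.coeff k = b * (k + 1) * P.coeff (k + 1) ∧
      ∀ᶠ n : ℕ in atTop, (hilbertSamuelFunction (I ⊔ Ideal.span {q}) n : ℚ) = Q.eval (n : ℚ) := by
  obtain ⟨hdeg, hcoeff⟩ := natDegree_sub_taylor_le_and_coeff_eq hP (b : ℚ)
  refine ⟨P - P.taylor (-b : ℚ), hdeg, hcoeff, ?_⟩
  rw [← map_add_atTop_eq_nat b, eventually_map]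
  filter_upwards [hIP, (tendsto_add_atTop_nat b).eventually hIP] with n hn hnb
  have hadd := hilbertSamuelFunction_add hI hq n
  rw [hcolon] at hadd
  rw [Polynomial.eval_sub, Polynomial.taylor_eval, ← hnb, hadd, Nat.cast_add, Nat.cast_add,
    add_neg_cancel_right, ← hn]
  ring

lemma exists_polynomial_eventually_eq_span_pair {d a b : ℕ}
    {q₁ q₂ : MvPolynomial (Fin (d + 2)) K} (hq₁ : q₁.IsHomogeneous a) (hq₂ : q₂.IsHomogeneous b)
    (h₀ : q₁ ≠ 0) (hrel : IsRelPrime q₁ q₂) :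
    ∃ P : Polynomial ℚ, P.natDegree ≤ d ∧ P.coeff d * d.factorial = a * b ∧
      ∀ᶠ n : ℕ in atTop, (hilbertSamuelFunction (Ideal.span {q₁, q₂}) n : ℚ) =
        P.eval (n : ℚ) := by
  have hcolon₁ : (⊥ : Ideal (MvPolynomial (Fin (d + 2)) K)).colon {q₁} = ⊥ := by
    ext f
    simp [Submodule.mem_colon_singleton, h₀]
  have hcolon₂ : (Ideal.span {q₁}).colon {q₂} = Ideal.span {q₁} := by
    ext f
    rw [Submodule.mem_colon_singleton, smul_eq_mul, Ideal.mem_span_singleton,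
      Ideal.mem_span_singleton]
    exact ⟨hrel.dvd_of_dvd_mul_right, fun h => h.mul_right _⟩
  have hbot := eventually_hilbertSamuelFunction_bot_eq (K := K) (σ := Fin (d + 2))
  rw [Fintype.card_fin] at hbot
  obtain ⟨P₁, hP₁, hcoeff₁, h₁⟩ := exists_polynomial_eventually_eq_of_colon_eq
    (Ideal.IsHomogeneous.bot _) hq₁ hcolon₁ (Polynomial.natDegree_preHilbertPoly ℚ (d + 2) 1).le
    hbot
  rw [bot_sup_eq] at h₁
  obtain ⟨P₂, hP₂, hcoeff₂, h₂⟩ := exists_polynomial_eventually_eq_of_colon_eq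
    (isHomogeneous_span_singleton hq₁) hq₂ hcolon₂ hP₁ h₁
  rw [← Ideal.span_union, Set.singleton_union] at h₂
  refine ⟨P₂, hP₂, ?_, h₂⟩
  rw [hcoeff₂, hcoeff₁, Polynomial.coeff_preHilbertPoly_self, Nat.factorial_succ,
    Nat.factorial_succ]
  push_cast
  field_simp

lemma hilbertSamuelFunction_bot_add_le {σ τ : Type*} [Finite σ]
    {I J : Ideal (MvPolynomial σ K)}
    (hJ : J.IsHomogeneous (homogeneousSubmodule σ K)) (hJI : J ≤ I) {z : MvPolynomial σ K} {c : ℕ}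
    (hz : z.IsHomogeneous c) (hzI : z ∈ I) {φ : MvPolynomial τ K →ₐ[K] MvPolynomial σ K}
    (hφ : ∀ k, (φ (X k)).IsHomogeneous 1) (hφJ : (J.colon {z}).comap φ = ⊥) (n : ℕ) :
    hilbertSamuelFunction (⊥ : Ideal (MvPolynomial τ K)) n + hilbertSamuelFunction I (n + c) ≤
      hilbertSamuelFunction J (n + c) := by
  rw [hilbertSamuelFunction_add hJ hz, ← hφJ]
  exact add_le_add (hilbertSamuelFunction_comap_le (isHomogeneous_colon_singleton hJ hz) hφ n)
    (hilbertSamuelFunction_anti (sup_le hJI ((Ideal.span_singleton_le_iff_mem _).2 hzI)) _)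

lemma exists_polynomial_eventually_hilbertSamuelFunction_le {σ : Type*} [Finite σ] {d : ℕ}
    {I J : Ideal (MvPolynomial σ K)}
    (hJ : J.IsHomogeneous (homogeneousSubmodule σ K)) (hJI : J ≤ I) {z : MvPolynomial σ K} {c : ℕ}
    (hz : z.IsHomogeneous c) (hzI : z ∈ I) {φ : MvPolynomial (Fin d) K →ₐ[K] MvPolynomial σ K}
    (hφ : ∀ k, (φ (X k)).IsHomogeneous 1) (hφJ : (J.colon {z}).comap φ = ⊥)
    {P : Polynomial ℚ} (hP : P.natDegree ≤ d)
    (hJP : ∀ᶠ n : ℕ in atTop, (hilbertSamuelFunction J n : ℚ) = P.eval (n : ℚ)) :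
    ∃ T : Polynomial ℚ, T.natDegree ≤ d ∧ T.coeff d * d.factorial = P.coeff d * d.factorial - 1 ∧
      ∀ᶠ n : ℕ in atTop, (hilbertSamuelFunction I n : ℚ) ≤ T.eval (n : ℚ) := by
  let B := Polynomial.preHilbertPoly ℚ d 1
  have hB : B.natDegree = d := Polynomial.natDegree_preHilbertPoly ℚ d 1
  have hdeg : (B.taylor (-c : ℚ)).natDegree = d := (Polynomial.natDegree_taylor _ _).trans hB
  have hcoeff : (B.taylor (-c : ℚ)).coeff d = (d.factorial : ℚ)⁻¹ := by
    rw [← Polynomial.coeff_preHilbertPoly_self ℚ d 1, ← hdeg, Polynomial.coeff_natDegree,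
      Polynomial.leadingCoeff_taylor, hdeg, Polynomial.leadingCoeff, hB]
  have hbot := eventually_hilbertSamuelFunction_bot_eq (K := K) (σ := Fin d)
  rw [Fintype.card_fin] at hbot
  refine ⟨P - B.taylor (-c : ℚ), Polynomial.natDegree_sub_le_of_le hP hdeg.le |>.trans (by simp),
    ?_, ?_⟩
  · rw [Polynomial.coeff_sub, hcoeff, sub_mul,
      inv_mul_cancel₀ (Nat.cast_ne_zero.2 d.factorial_ne_zero)]
  · rw [← map_add_atTop_eq_nat c, eventually_map]
    filter_upwards [hbot, (tendsto_add_atTop_nat c).eventually hJP] with n hn hnJ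
    rw [Polynomial.eval_sub, Polynomial.taylor_eval, ← hnJ, Nat.cast_add, add_neg_cancel_right,
      ← hn, le_sub_iff_add_le']
    exact_mod_cast hilbertSamuelFunction_bot_add_le hJ hJI hz hzI hφ hφJ n

lemma exists_ne_zero_eval_ne_zero {σ : Type*} {q : MvPolynomial σ K} {a : ℕ}
    (hq : q.IsHomogeneous a) (h₀ : q ≠ 0) (hunit : ¬IsUnit q)
    (hK : (a : Cardinal) ≤ Cardinal.mk K) : ∃ v ≠ 0, eval v q ≠ 0 := by
  obtain ⟨v, hv⟩ : ∃ v, eval v q ≠ 0 := by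
    by_contra! h
    exact h₀ (hq.eq_zero_of_forall_eval_eq_zero_of_le_card h hK)
  refine ⟨v, ?_, hv⟩
  rintro rfl
  rw [eval_zero] at hv
  have ha : a = 0 := by simpa using (hq hv).symm
  have hconst : q = C (constantCoeff q) :=
    totalDegree_eq_zero_iff_eq_C.1 (Nat.le_zero.1 (ha ▸ hq.totalDegree_le))
  exact hunit (hconst ▸ (isUnit_iff_ne_zero.2 hv).map C)

lemma le_of_height_eq {n h : ℕ} {I : Ideal (MvPolynomial (Fin n) K)} (htop : I ≠ ⊤)
    (hI : I.height = h) : h ≤ n := by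
  have hle := Ideal.height_le_ringKrullDim_of_ne_top htop
  rw [hI, MvPolynomial.ringKrullDim_of_isNoetherianRing, ringKrullDim_eq_zero_of_field, zero_add,
    Nat.card_fin] at hle
  exact_mod_cast hle

lemma ringKrullDim_quotient_eq_of_comap_eq_bot {K : Type u} [Field K] {d h : ℕ}
    {I P : Ideal (MvPolynomial (Fin (d + h)) K)} (hI : I.height = h) [P.IsPrime] (hIP : I ≤ P)
    {φ : MvPolynomial (Fin d) K →ₐ[K] MvPolynomial (Fin (d + h)) K} (hφ : P.comap φ = ⊥) :
    ringKrullDim (MvPolynomial (Fin (d + h)) K ⧸ I) = d := by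
  refine le_antisymm ?_ ?_
  · have hle := height_add_ringKrullDim_quotient_le I
    rw [hI, MvPolynomial.ringKrullDim_of_isNoetherianRing, ringKrullDim_eq_zero_of_field, zero_add,
      Nat.card_fin, Nat.cast_add, add_comm] at hle
    exact ENat.WithBot.add_le_add_natCast_right_iff.1 hle
  · have hinj : Function.Injective ((Ideal.Quotient.mkₐ K P).comp φ) := by
      rw [injective_iff_map_eq_zero]
      intro f hf
      rw [← Ideal.mem_bot, ← hφ]
      exact Ideal.Quotient.eq_zero_iff_mem (I := P).1 hf
    exact (le_ringKrullDim_of_injective_algHom hinj).trans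
      (ringKrullDim_le_of_surjective _ (Ideal.Quotient.factor_surjective hIP))

lemma exists_isPrime_algHom_comap_eq_bot {d a : ℕ} {I : Ideal (MvPolynomial (Fin (d + 2)) K)}
    (hI : I.height = 2) {q₁ q₂ : MvPolynomial (Fin (d + 2)) K} (hqI : Ideal.span {q₁, q₂} ≤ I)
    (hq₁ : q₁.IsHomogeneous a) {v : Fin (d + 2) → K} (hv : v ≠ 0) (hq₁v : eval v q₁ ≠ 0)
    (hrel : IsRelPrime q₁ q₂) :
    ∃ P : Ideal (MvPolynomial (Fin (d + 2)) K), P.IsPrime ∧ I ≤ P ∧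
      ∃ φ : MvPolynomial (Fin d) K →ₐ[K] MvPolynomial (Fin (d + 2)) K,
        (∀ k, (φ (X k)).IsHomogeneous 1) ∧ P.comap φ = ⊥ := by
  obtain ⟨P, hP, hIP, hPht⟩ := Ideal.exists_isPrime_height_eq hI
  have hq₁₀ : q₁ ≠ 0 := by
    rintro rfl
    exact hq₁v (map_zero _)
  obtain ⟨z, rfl⟩ := exists_colon_singleton_eq_of_height_le (hqI.trans hIP)
    (hPht.trans_le (two_le_height_span_pair hq₁₀ hrel))
  have hz : z ∉ Ideal.span {q₁, q₂} := fun h =>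
    hP.ne_top ((Submodule.colon_eq_top_iff_subset _).2 (Set.singleton_subset_iff.2 h))
  exact ⟨_, hP, hIP, exists_algHom_comap_colon_eq_bot hq₁ hv hq₁v hrel hz⟩

theorem exists_isHSMultiplicity_lt {K : Type u} [Field K] {d a b c : ℕ}
    {I : Ideal (MvPolynomial (Fin (d + 2)) K)} (hI : I.IsHomogeneous (homogeneousSubmodule _ K))
    (hht : I.height = 2) {q₁ q₂ z : MvPolynomial (Fin (d + 2)) K} (hq₁ : q₁.IsHomogeneous a)
    (hq₂ : q₂.IsHomogeneous b) (hz : z.IsHomogeneous c) (hqI : Ideal.span {q₁, q₂} ≤ I)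
    (hzI : z ∈ I) {v : Fin (d + 2) → K} (hv : v ≠ 0) (hq₁v : eval v q₁ ≠ 0)
    (hrel : IsRelPrime q₁ q₂) (hzq : z ∉ Ideal.span {q₁, q₂}) :
    ∃ e < a * b, IsHSMultiplicity _ (maxIdeal K (Fin (d + 2))) I e := by
  have hq₁₀ : q₁ ≠ 0 := by
    rintro rfl
    exact hq₁v (map_zero _)
  have hJ : (Ideal.span {q₁, q₂}).IsHomogeneous (homogeneousSubmodule _ K) := by
    rw [Ideal.span_insert]
    exact (isHomogeneous_span_singleton hq₁).sup (isHomogeneous_span_singleton hq₂)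
  obtain ⟨S, hS, hScoeff, hJS⟩ := exists_polynomial_eventually_eq_span_pair hq₁ hq₂ hq₁₀ hrel
  obtain ⟨φ, hφ, hφJ⟩ := exists_algHom_comap_colon_eq_bot hq₁ hv hq₁v hrel hzq
  obtain ⟨T, hT, hTcoeff, hIT⟩ :=
    exists_polynomial_eventually_hilbertSamuelFunction_le hJ hqI hz hzI hφ hφJ hS hJS
  obtain ⟨𝔭, _, hI𝔭, ψ, hψ, hψ𝔭⟩ := exists_isPrime_algHom_comap_eq_bot hht hqI hq₁ hv hq₁v hrel
  have hψI : I.comap ψ = ⊥ := eq_bot_iff.2 ((Ideal.comap_mono hI𝔭).trans hψ𝔭.le)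
  have hbot := eventually_hilbertSamuelFunction_bot_eq (K := K) (σ := Fin d)
  rw [Fintype.card_fin] at hbot
  obtain ⟨P, hP⟩ := exists_polynomial_eventually_eq_hilbertSamuelFunction hI
  obtain ⟨hdeg, e, he, hle⟩ := natDegree_eq_and_exists_natCast_eq_leadingCoeff_mul_factorial hP
    (hbot.mono fun n hn => hn ▸ mod_cast hψI ▸ hilbertSamuelFunction_comap_le hI hψ n)
    hIT (Polynomial.natDegree_preHilbertPoly ℚ d 1).le hT
    (by rw [Polynomial.coeff_preHilbertPoly_self]; positivity)
  refine ⟨e, ?_, d, P, ringKrullDim_quotient_eq_of_comap_eq_bot hht hI𝔭 hψ𝔭, hdeg, he,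
    hP.mono fun n hn => ⟨_, hn, moduleLength_eq_hilbertSamuelFunction I n⟩⟩
  rw [hTcoeff, hScoeff, le_sub_iff_add_le] at hle
  exact_mod_cast hle

theorem stmt2_general (K : Type u) [Field K] (N D : ℕ) (hD : (D : Cardinal) ≤ Cardinal.mk K)
    {ι : Type*} (I : Ideal (MvPolynomial (Fin N) K)) (g : ι → MvPolynomial (Fin N) K)
    (hg : ∀ i, (g i).IsHomogeneous D)
    (hI : I = Ideal.span (Set.range g))
    (hmin : ∀ h : Fin 2 → MvPolynomial (Fin N) K, I ≠ Ideal.span (Set.range h))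
    (hht : idealHeight I = 2) :
    ∃ e < D ^ 2, IsHSMultiplicity (MvPolynomial (Fin N) K) (maxIdeal K (Fin N)) I e := by
  rw [idealHeight_eq_height] at hht
  have hgI : ∀ i, g i ∈ I := fun i => hI ▸ Ideal.subset_span ⟨i, rfl⟩
  obtain ⟨q₁, q₂, hq₁, hq₂, hqI, h₀, hrel⟩ := exists_isRelPrime_of_two_le_height hg (hI ▸ hht.ge) hD
  rw [← hI] at hqI
  have htop : I ≠ ⊤ := by
    rintro rfl
    simp at hht
  have hq₁I : q₁ ∈ I := hqI (Ideal.subset_span (Set.mem_insert _ _))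
  obtain ⟨v, hv, hv₁⟩ := exists_ne_zero_eval_ne_zero hq₁ h₀
    (fun hu => htop (I.eq_top_of_isUnit_mem hq₁I hu)) hD
  obtain ⟨i, hi⟩ : ∃ i, g i ∉ Ideal.span {q₁, q₂} := by
    by_contra! h
    refine hmin ![q₁, q₂] ?_
    rw [Matrix.range_cons_cons_empty]
    exact le_antisymm (hI.trans_le (Ideal.span_le.2 (Set.range_subset_iff.2 h))) hqI
  obtain ⟨d, rfl⟩ := Nat.exists_eq_add_of_le' (le_of_height_eq htop hht)
  have hIhom : I.IsHomogeneous (homogeneousSubmodule _ K) :=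
    hI ▸ Ideal.homogeneous_span _ _ (Set.forall_mem_range.2 fun i => ⟨D, hg i⟩)
  exact sq D ▸ exists_isHSMultiplicity_lt hIhom hht hq₁ hq₂ (hg i) hqI (hgI i) hv hv₁ hrel hi

end Multiplicity

/-- an ideal minimally generated by `n ≥ 3` quadrics with `ht I = 2` has
Hilbert–Samuel multiplicity `e(R/I) ≤ 3` (w.r.t. the homogeneous maximal ideal). -/
theorem stmt2 (K : Type u) [Field K] (N n : ℕ) (hn : 3 ≤ n)
    (I : Ideal (MvPolynomial (Fin N) K)) (g : Fin n → MvPolynomial (Fin N) K)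
    (hg : ∀ i, (g i).IsHomogeneous 2)
    (hI : I = Ideal.span (Set.range g))
    (hmin : ∀ (k : ℕ) (h : Fin k → MvPolynomial (Fin N) K),
      I = Ideal.span (Set.range h) → n ≤ k)
    (hht : idealHeight I = 2) :
    ∃ e : ℕ, e ≤ 3 ∧ IsHSMultiplicity (MvPolynomial (Fin N) K) (maxIdeal K (Fin N)) I e := by
  obtain ⟨e, he, hIe⟩ := stmt2_general K N 2 (Cardinal.two_le_iff.2 ⟨0, 1, zero_ne_one⟩) I g hg hI
    (fun h hh => absurd (hmin 2 h hh) (by omega)) hht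
  exact ⟨e, by omega, hIe⟩
end
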